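/- arXiv:2108.02692 — 4 statements merged into one kernel-verified Lean document; each statement's English description precedes it below -/
import Mathlib

section
/- Let P be a MultiSLP over a finite set C of constants, let v be a variable of P that occurs exactly once as an argument of another statement and does not occur in the return list, and let Q be the MultiSLP obtained from P by deleting the statement v ← ⊕(t_1,…,t_n) and replacing the single occurrence of v in the argument list of the statement using it by the terms t_1,…,t_n (in place). Then Q is equivalent to P (it has the same result as P) and #_M(Q) < #_M(P); in fact #_M(Q) = #_M(P) − 2. -/
/-- Terms of a MultiSLP over a set of constants `C`:
either a constant, or a variable referenced by its statement index. -/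
inductive Term (C : Type) where
  | const : C → Term C
  | var : ℕ → Term C
  deriving DecidableEq

/-- A MultiSLP over the constants `C`: a sequence of statements
`v_i ← ⊕(t_{i,1},…,t_{i,n_i})` (statement `i` defines variable `i`, each `n_i ≥ 2`,
and every variable used in statement `i` has index `< i`), followed by a return
list of terms whose variables are all defined. -/
structure MultiSLP (C : Type) where
  stmts : List (List (Term C))
  ret : List (Term C)
  arity : ∀ args ∈ stmts, 2 ≤ args.length
  wfStmts : ∀ i, i < stmts.length → ∀ t ∈ stmts.getD i [], ∀ j, t = Term.var j → j < i
  wfRet : ∀ t ∈ ret, ∀ j, t = Term.var j → j < stmts.length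

/-- The value of a constant `c` is the standard basis vector `e_c` of `GF(2)^C`. -/
def eConst {C : Type} [DecidableEq C] (c : C) : C → ZMod 2 := fun d => if d = c then 1 else 0

/-- Value of a term, given the list of values of the previously defined variables. -/
def Term.eval {C : Type} [DecidableEq C] (env : List (C → ZMod 2)) : Term C → (C → ZMod 2)
  | .const c => eConst c
  | .var j => env.getD j 0

/-- Values of the variables of a MultiSLP: the value of variable `i` is the GF(2)-sum
(XOR) of the values of the arguments of statement `i`. -/
def MultiSLP.envList {C : Type} [DecidableEq C] (P : MultiSLP C) : List (C → ZMod 2) :=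
  P.stmts.foldl (fun env args => env ++ [(args.map (Term.eval env)).sum]) []

/-- The result of a MultiSLP: the tuple of values of its returned terms. -/
def MultiSLP.result {C : Type} [DecidableEq C] (P : MultiSLP C) : List (C → ZMod 2) :=
  P.ret.map (Term.eval P.envList)

/-- The value of variable `i` of a MultiSLP. -/
def MultiSLP.value {C : Type} [DecidableEq C] (P : MultiSLP C) (i : ℕ) : C → ZMod 2 :=
  P.envList.getD i 0

/-- The memory-access cost `#_M(P) = Σ_i (n_i + 1)`. -/
def MultiSLP.costM {C : Type} (P : MultiSLP C) : ℕ :=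
  (P.stmts.map fun args => args.length + 1).sum

/-- Shift variable indices after deleting statement `i`: variables with index `> i`
are decremented by one. -/
def shiftTerm {C : Type} (i : ℕ) : Term C → Term C
  | .const c => .const c
  | .var j => .var (if i < j then j - 1 else j)

/-- Replace each occurrence of the variable `v_i` in an argument list, in place,
by the list of terms `repl`. -/
def substVar {C : Type} [DecidableEq C] (i : ℕ) (repl : List (Term C))
    (args : List (Term C)) : List (Term C) :=
  args.flatMap fun t => if t = Term.var i then repl else [t]

/-- Values of a raw list of statements. -/
def evStmts {C : Type} [DecidableEq C] (l : List (List (Term C))) : List (C → ZMod 2) :=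
  l.foldl (fun env args => env ++ [(args.map (Term.eval env)).sum]) []

theorem evStmts_append {C : Type} [DecidableEq C] (l : List (List (Term C)))
    (a : List (Term C)) :
    evStmts (l ++ [a]) = evStmts l ++ [(a.map (Term.eval (evStmts l))).sum] := by
  simp [evStmts, List.foldl_append]

theorem evStmts_length {C : Type} [DecidableEq C] (l : List (List (Term C))) :
    (evStmts l).length = l.length := by
  induction l using List.reverseRecOn with
  | nil => rfl
  | append_singleton l a ih => rw [evStmts_append]; simp [ih]

theorem evStmts_getD {C : Type} [DecidableEq C] (l : List (List (Term C)))
    (wf : ∀ i, i < l.length → ∀ t ∈ l.getD i [], ∀ j, t = Term.var j → j < i) :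
    ∀ k, k < l.length →
      (evStmts l).getD k 0 = ((l.getD k []).map (Term.eval (evStmts l))).sum := by
  induction l using List.reverseRecOn with
  | nil => intro k hk; simp at hk
  | append_singleton l a ih =>
    have wf' : ∀ i, i < l.length → ∀ t ∈ l.getD i [], ∀ j, t = Term.var j → j < i := by
      intro i hi t ht j hj
      refine wf i (by simp; omega) t ?_ j hj
      rwa [List.getD_append _ _ _ _ hi]
    have key : ∀ t : Term C, (∀ j, t = Term.var j → j < l.length) →
        Term.eval (evStmts (l ++ [a])) t = Term.eval (evStmts l) t := by
      intro t ht
      cases t with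
      | const c => rfl
      | var j =>
        have := ht j rfl
        simp only [Term.eval, evStmts_append]
        rw [List.getD_append _ _ _ _ (by rw [evStmts_length]; exact this)]
    intro k hk
    have hk' : k ≤ l.length := by simp at hk; omega
    have e : ((l ++ [a]).getD k []).map (Term.eval (evStmts (l ++ [a])))
        = ((l ++ [a]).getD k []).map (Term.eval (evStmts l)) := by
      apply List.map_congr_left
      intro t ht
      exact key t (fun j hj => lt_of_lt_of_le (wf k hk t ht j hj) hk')
    rw [e]
    rcases Nat.lt_or_eq_of_le hk' with h | h
    · rw [List.getD_append _ _ _ _ h, evStmts_append,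
        List.getD_append _ _ _ _ (by rw [evStmts_length]; exact h)]
      exact ih wf' k h
    · subst h
      rw [evStmts_append, List.getD_append_right _ _ _ _ (by rw [evStmts_length]),
        List.getD_append_right _ _ _ _ le_rfl, evStmts_length]
      simp

theorem sum_flatMap_eq {α β M : Type} [AddCommMonoid M] (g : α → List β) (f : β → M)
    (h : α → M) (l : List α) (H : ∀ t ∈ l, ((g t).map f).sum = h t) :
    ((l.flatMap g).map f).sum = (l.map h).sum := by
  induction l with
  | nil => simp
  | cons a l ih =>
    rw [List.flatMap_cons, List.map_append, List.sum_append, H a (by simp),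
      ih (fun t ht => H t (by simp [ht]))]
    simp

theorem substVar_length {C : Type} [DecidableEq C] (i : ℕ) (r a : List (Term C)) :
    (substVar i r a).length + a.count (Term.var i)
      = a.length + a.count (Term.var i) * r.length := by
  induction a with
  | nil => simp [substVar]
  | cons t a ih =>
    unfold substVar at ih ⊢
    by_cases h : t = Term.var i
    · subst h
      simp only [List.flatMap_cons, if_true, List.length_append, List.count_cons_self,
        List.length_cons, add_mul]
      omega
    · simp only [List.flatMap_cons, if_neg h, List.length_append, List.count_cons_of_ne h,
        List.length_cons, List.length_nil]
      omega

theorem sum_eraseIdx_nat {α : Type} (f : α → ℕ) (d : α) (l : List α) (i : ℕ)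
    (hi : i < l.length) :
    (l.map f).sum = f (l.getD i d) + ((l.eraseIdx i).map f).sum := by
  induction l generalizing i with
  | nil => simp at hi
  | cons a l ih =>
    cases i with
    | zero => simp
    | succ i =>
      have := ih i (by simpa using hi)
      simp only [List.map_cons, List.sum_cons, List.getD_cons_succ, List.eraseIdx_cons_succ]
      omega

theorem sum_set_nat {α : Type} (f : α → ℕ) (d x : α) (l : List α) (i : ℕ)
    (hi : i < l.length) :
    ((l.set i x).map f).sum + f (l.getD i d) = (l.map f).sum + f x := by
  induction l generalizing i with
  | nil => simp at hi
  | cons a l ih =>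
    cases i with
    | zero => simp; omega
    | succ i =>
      have := ih i (by simpa using hi)
      simp only [List.map_cons, List.sum_cons, List.getD_cons_succ, List.set_cons_succ]
      omega

/-- **XOR fusion step.** Let `P` be a MultiSLP over a finite set `C` of constants,
let `v = v_i` be a variable of `P` that occurs exactly once as an argument of another
statement (statement `j`) and does not occur in the return list, and let `Q` be
obtained from `P` by deleting statement `i` (`v ← ⊕(t_1,…,t_n)`) and replacing the
single occurrence of `v` in the argument list of statement `j` by `t_1,…,t_n` in place
(with variable indices shifted accordingly).  Then `Q` is equivalent to `P` and
`#_M(Q) = #_M(P) − 2 < #_M(P)`. -/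
theorem xor_fusion_step {C : Type} [Fintype C] [DecidableEq C]
    (P Q : MultiSLP C) (i j : ℕ)
    (hij : i < j) (hj : j < P.stmts.length)
    (hcount : (P.stmts.getD j []).count (Term.var i) = 1)
    (honce : ∀ k, k < P.stmts.length → k ≠ j → Term.var i ∉ P.stmts.getD k [])
    (hret : Term.var i ∉ P.ret)
    (hQstmts : Q.stmts =
      ((P.stmts.set j (substVar i (P.stmts.getD i []) (P.stmts.getD j []))).eraseIdx i).map
        (List.map (shiftTerm i)))
    (hQret : Q.ret = P.ret.map (shiftTerm i)) :
    Q.result = P.result ∧ Q.costM = P.costM - 2 ∧ Q.costM < P.costM := by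
  have hi : i < P.stmts.length := hij.trans hj
  have hlen : Q.stmts.length + 1 = P.stmts.length := by
    rw [hQstmts, List.length_map, List.length_eraseIdx, List.length_set, if_pos hi]
    omega
  have hP := evStmts_getD P.stmts P.wfStmts
  have hQ := evStmts_getD Q.stmts Q.wfStmts
  have hQget : ∀ k, k ≠ i → k < P.stmts.length →
      Q.stmts.getD (if i < k then k - 1 else k) [] =
        (if k = j then substVar i (P.stmts.getD i []) (P.stmts.getD j [])
          else P.stmts.getD k []).map (shiftTerm i) := by
    intro k hk hkl
    rw [hQstmts]
    simp only [List.getD_eq_getElem?_getD, List.getElem?_map, List.getElem?_eraseIdx,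
      List.getElem?_set]
    by_cases h : i < k
    · have h1 : ¬ (k - 1 < i) := by omega
      have h2 : k - 1 + 1 = k := by omega
      simp only [if_pos h, if_neg h1, h2]
      by_cases hkj : k = j
      · subst hkj
        simp [hj]
      · simp [hkj, Ne.symm hkj, hkl]
    · have h1 : k < i := by omega
      have hkj : k ≠ j := by omega
      simp [if_neg h, if_pos h1, hkj, Ne.symm hkj, hkl]
  have main : ∀ k, k < P.stmts.length → k ≠ i →
      (evStmts Q.stmts).getD (if i < k then k - 1 else k) 0 = (evStmts P.stmts).getD k 0 := by
    intro k
    induction k using Nat.strong_induction_on with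
    | _ k ih =>
      intro hk hki
      have hterm : ∀ t : Term C, t ≠ Term.var i → (∀ m, t = Term.var m → m < k) →
          Term.eval (evStmts Q.stmts) (shiftTerm i t) = Term.eval (evStmts P.stmts) t := by
        intro t ht htm
        cases t with
        | const c => rfl
        | var m =>
          have hm := htm m rfl
          exact ih m hm (hm.trans hk) (fun h => ht (by rw [h]))
      rw [hQ _ (by split_ifs <;> omega), hQget k hki hk, hP k hk, List.map_map]
      by_cases hkj : k = j
      · subst hkj
        rw [if_pos rfl]
        unfold substVar
        apply sum_flatMap_eq
        intro t ht
        by_cases hti : t = Term.var i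
        · rw [if_pos hti, hti]
          change _ = (evStmts P.stmts).getD i 0
          rw [hP i hi]
          congr 1
          apply List.map_congr_left
          intro s hs
          have hs' := P.wfStmts i hi s hs
          exact hterm s (fun h => lt_irrefl _ (hs' i h)) (fun m hm => (hs' m hm).trans hij)
        · rw [if_neg hti]
          simpa using hterm t hti (P.wfStmts k hk t ht)
      · rw [if_neg hkj]
        congr 1
        apply List.map_congr_left
        intro t ht
        exact hterm t (fun h => honce k hk hkj (h ▸ ht)) (P.wfStmts k hk t ht)
  have hres : Q.result = P.result := by
    unfold MultiSLP.result
    rw [hQret, List.map_map]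
    apply List.map_congr_left
    intro t ht
    cases t with
    | const c => rfl
    | var m => exact main m (P.wfRet _ ht m rfl) (fun h => hret (h ▸ ht))
  have hcost : Q.costM + 2 = P.costM := by
    unfold MultiSLP.costM
    rw [hQstmts, List.map_map]
    have hf : ((fun args : List (Term C) => args.length + 1) ∘ List.map (shiftTerm i))
        = fun args => args.length + 1 := by
      funext a; simp
    rw [hf]
    have h1 := sum_eraseIdx_nat (fun args : List (Term C) => args.length + 1) []
      (P.stmts.set j (substVar i (P.stmts.getD i []) (P.stmts.getD j []))) i (by simpa using hi)
    have h2 := sum_set_nat (fun args : List (Term C) => args.length + 1) []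
      (substVar i (P.stmts.getD i []) (P.stmts.getD j [])) P.stmts j hj
    have h3 := substVar_length i (P.stmts.getD i []) (P.stmts.getD j [])
    have h4 : (P.stmts.set j (substVar i (P.stmts.getD i []) (P.stmts.getD j []))).getD i []
        = P.stmts.getD i [] := by
      simp [List.getD_eq_getElem?_getD, List.getElem?_set, (ne_of_gt hij)]
    rw [hcount, one_mul] at h3
    rw [h4] at h1
    omega
  exact ⟨hres, by omega, by omega⟩
end

section
/- Let G be a finite simple graph with node set N and edge set E, and let X ⊆ N be a vertex cover of G with |X| = k. Then there exists a MultiSLP Q over the constants of P_G that is equivalent to P_G and satisfies #_M(Q) = 3·|E| + 8·|N| + k. -/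
/-- The constants used by `P_G`: the fresh constant `ρ`, the nodes of `G`,
and for each node `a` the fresh local nodes `λ_a` and `μ_a`. -/
inductive Const (N : Type) where
  | rho : Const N
  | node : N → Const N
  | lam : N → Const N
  | mu : N → Const N
  deriving DecidableEq

/-- The result of `P_G`: the family of values `e_ρ + e_x + e_y` indexed by the
edges of `G_modif` (first the edges of `G`, enumerated by the list `L`, then for
each node `a` — enumerated by `nodes` — the two local edges `(a,λ_a)` and `(a,μ_a)`).
A MultiSLP `Q` is equivalent to `P_G` iff `Q.result = targetValues L nodes`. -/
def targetValues {N : Type} [DecidableEq N] (L : List (N × N)) (nodes : List N) :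
    List (Const N → ZMod 2) :=
  (L.map fun p =>
    eConst Const.rho + eConst (Const.node p.1) + eConst (Const.node p.2))
  ++ nodes.flatMap fun a =>
      [eConst Const.rho + eConst (Const.node a) + eConst (Const.lam a),
       eConst Const.rho + eConst (Const.node a) + eConst (Const.mu a)]

/-- All variables occurring in the statement have index below `n`. -/
def BoundedBy {C : Type} (n : ℕ) (args : List (Term C)) : Prop :=
  ∀ t ∈ args, ∀ j, t = Term.var j → j < n

theorem eval_append {C : Type} [DecidableEq C] (E0 E1 : List (C → ZMod 2)) (args : List (Term C))
    (h : BoundedBy E0.length args) :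
    args.map (Term.eval (E0 ++ E1)) = args.map (Term.eval E0) := by
  apply List.map_congr_left
  intro t ht
  cases t with
  | const c => rfl
  | var j =>
    have := h _ ht j rfl
    simp only [Term.eval]
    rw [List.getD_append _ _ _ _ this]

theorem foldl_flat {C : Type} [DecidableEq C] (E0 : List (C → ZMod 2)) (S : List (List (Term C)))
    (h : ∀ args ∈ S, BoundedBy E0.length args) (E1 : List (C → ZMod 2)) :
    S.foldl (fun env args => env ++ [(args.map (Term.eval env)).sum]) (E0 ++ E1)
      = E0 ++ E1 ++ S.map (fun args => (args.map (Term.eval E0)).sum) := by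
  induction S generalizing E1 with
  | nil => simp
  | cons a S ih =>
    rw [List.foldl_cons, eval_append E0 E1 a (h a (by simp)), List.append_assoc,
      ih (fun b hb => h b (by simp [hb]))]
    simp

/-- Two-layer programs. -/
theorem two_layer {C : Type} [DecidableEq C] (S1 S2 : List (List (Term C)))
    (a1 : ∀ args ∈ S1, 2 ≤ args.length) (a2 : ∀ args ∈ S2, 2 ≤ args.length)
    (h1 : ∀ args ∈ S1, BoundedBy 0 args) (h2 : ∀ args ∈ S2, BoundedBy S1.length args) :
    ∃ Q : MultiSLP C, Q.stmts = S1 ++ S2 ∧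
      Q.result = S2.map (fun args => (args.map (Term.eval
        (S1.map (fun args => (args.map (Term.eval [])).sum)))).sum) := by
  refine ⟨⟨S1 ++ S2, (List.range S2.length).map (fun i => Term.var (S1.length + i)), ?_, ?_, ?_⟩,
    rfl, ?_⟩
  · intro args h
    rcases List.mem_append.1 h with h | h
    exacts [a1 _ h, a2 _ h]
  · intro i hi t ht j hj
    by_cases hc : i < S1.length
    · rw [List.getD_append _ _ _ _ hc, List.getD_eq_getElem _ _ hc] at ht
      have := h1 _ (List.getElem_mem hc) t ht j hj
      omega
    · have hi2 : i - S1.length < S2.length := by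
        rw [List.length_append] at hi; omega
      rw [List.getD_append_right _ _ _ _ (by omega), List.getD_eq_getElem _ _ hi2] at ht
      have := h2 _ (List.getElem_mem hi2) t ht j hj
      omega
  · intro t ht j hj
    simp only [List.mem_map, List.mem_range] at ht
    obtain ⟨i, hi, rfl⟩ := ht
    cases hj
    simp; omega
  · simp only [MultiSLP.result, MultiSLP.envList, List.foldl_append]
    have e1 := foldl_flat (C := C) [] S1 (by simpa using h1) []
    simp only [List.nil_append] at e1
    rw [e1]
    have e2 := foldl_flat (S1.map (fun args => (args.map (Term.eval [])).sum)) S2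
      (by simpa using h2) []
    simp only [List.append_nil] at e2
    rw [e2]
    apply List.ext_getElem
    · simp
    · intro i hi hi'
      simp only [List.length_map] at hi'
      simp [Term.eval, hi', List.getD_eq_getElem?_getD]

/-- The statement computing `ρ ⊕ a ⊕ c`, where `xs` lists the cover nodes. -/
def goalStmt {N : Type} [DecidableEq N] (xs : List N) (a : N) (c : Const N) :
    List (Term (Const N)) :=
  if a ∈ xs then [Term.var (xs.idxOf a), Term.const c]
  else [Term.const Const.rho, Term.const (Const.node a), Term.const c]

/-- First layer. -/
def layerOne {N : Type} (xs : List N) : List (List (Term (Const N))) :=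
  xs.map fun a => [Term.const Const.rho, Term.const (Const.node a)]

theorem goal_value {N : Type} [DecidableEq N] (xs : List N) (a : N) (c : Const N) :
    ((goalStmt xs a c).map (Term.eval
      ((layerOne xs).map (fun args => (args.map (Term.eval [])).sum)))).sum
      = eConst Const.rho + eConst (Const.node a) + eConst c := by
  unfold goalStmt
  split_ifs with h
  · have := List.idxOf_lt_length_of_mem h
    simp [Term.eval, layerOne, List.getD_eq_getElem?_getD, this]
  · simp [Term.eval, add_assoc]

theorem goal_bounded {N : Type} [DecidableEq N] (xs : List N) (a : N) (c : Const N) :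
    BoundedBy (layerOne xs).length (goalStmt xs a c) := by
  intro t ht j hj
  subst hj
  unfold goalStmt at ht
  split_ifs at ht with h
  · have := List.idxOf_lt_length_of_mem h
    simp at ht
    simpa [layerOne, ht] using this
  · simp at ht

theorem goal_arity {N : Type} [DecidableEq N] (xs : List N) (a : N) (c : Const N) :
    2 ≤ (goalStmt xs a c).length := by
  unfold goalStmt; split_ifs <;> simp

/-- Second-layer statement for an edge. -/
def edgeStmt {N : Type} [DecidableEq N] (xs : List N) (p : N × N) : List (Term (Const N)) :=
  if p.1 ∈ xs then goalStmt xs p.1 (Const.node p.2) else goalStmt xs p.2 (Const.node p.1)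

/-- Second layer. -/
def layerTwo {N : Type} [DecidableEq N] (xs : List N) (L : List (N × N)) (nodes : List N) :
    List (List (Term (Const N))) :=
  L.map (edgeStmt xs) ++
    nodes.flatMap fun a => [goalStmt xs a (Const.lam a), goalStmt xs a (Const.mu a)]

theorem mem_layerTwo {N : Type} [DecidableEq N] (xs : List N) (L : List (N × N)) (nodes : List N)
    (args : List (Term (Const N))) (h : args ∈ layerTwo xs L nodes) :
    ∃ a c, args = goalStmt xs a c := by
  simp only [layerTwo, List.mem_append, List.mem_map, List.mem_flatMap, List.mem_cons,
    List.not_mem_nil, or_false] at h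
  rcases h with ⟨p, _, rfl⟩ | ⟨a, _, rfl | rfl⟩
  · unfold edgeStmt; split_ifs <;> exact ⟨_, _, rfl⟩
  · exact ⟨_, _, rfl⟩
  · exact ⟨_, _, rfl⟩

theorem cost_edges {N : Type} [DecidableEq N] (xs : List N) (L : List (N × N))
    (h : ∀ p ∈ L, p.1 ∈ xs ∨ p.2 ∈ xs) :
    ((L.map (edgeStmt xs)).map fun args => args.length + 1).sum = 3 * L.length := by
  induction L with
  | nil => rfl
  | cons p L ih =>
    have hp : (edgeStmt xs p).length = 2 := by
      unfold edgeStmt goalStmt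
      rcases h p (by simp) with h | h <;> simp [h]
      split_ifs <;> rfl
    simp only [List.map_cons, List.sum_cons, List.length_cons]
    rw [ih (fun q hq => h q (by simp [hq])), hp]
    omega

theorem cost_local {N : Type} [DecidableEq N] (xs : List N) (nodes : List N) :
    ((nodes.flatMap fun a => [goalStmt xs a (Const.lam a), goalStmt xs a (Const.mu a)]).map
      fun args => args.length + 1).sum + 2 * (nodes.filter (· ∈ xs)).length
      = 8 * nodes.length := by
  induction nodes with
  | nil => rfl
  | cons a nodes ih =>
    by_cases h : a ∈ xs
    · simp [goalStmt, h] at ih ⊢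
      omega
    · simp [goalStmt, h] at ih ⊢
      omega

/-- **From vertex covers to cheap MultiSLPs.**  Let `G` be a finite simple graph with
node set `N` and edge set `E` (enumerated without repetition by the list `L`; `nodes`
enumerates `N`), and let `X ⊆ N` be a vertex cover of `G` with `|X| = k`.  Then there
is a MultiSLP `Q` over the constants of `P_G` that is equivalent to `P_G` and satisfies
`#_M(Q) = 3·|E| + 8·|N| + k`. -/
theorem cover_to_multislp {N : Type} [Fintype N] [DecidableEq N]
    (G : SimpleGraph N) [DecidableRel G.Adj]
    (L : List (N × N)) (nodes : List N)
    (hnodesN : nodes.Nodup) (hnodesA : ∀ a : N, a ∈ nodes)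
    (hLN : (L.map fun p => s(p.1, p.2)).Nodup)
    (hLadj : ∀ p ∈ L, G.Adj p.1 p.2)
    (hLall : ∀ a b : N, G.Adj a b → s(a, b) ∈ L.map fun p => s(p.1, p.2))
    (X : Finset N) (hX : ∀ a b : N, G.Adj a b → a ∈ X ∨ b ∈ X)
    (k : ℕ) (hk : X.card = k) :
    ∃ Q : MultiSLP (Const N), Q.result = targetValues L nodes ∧
      Q.costM = 3 * G.edgeFinset.card + 8 * Fintype.card N + k := by
  have hsym : ∀ p ∈ L, p.1 ∈ X.toList ∨ p.2 ∈ X.toList := by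
    intro p hp
    simpa using hX _ _ (hLadj p hp)
  obtain ⟨Q, hs, hr⟩ := two_layer (layerOne X.toList) (layerTwo X.toList L nodes)
    (by intro args h
        simp only [layerOne, List.mem_map] at h
        obtain ⟨a, _, rfl⟩ := h
        simp)
    (by intro args h
        obtain ⟨a, c, rfl⟩ := mem_layerTwo _ _ _ _ h
        exact goal_arity _ _ _)
    (by intro args h
        simp only [layerOne, List.mem_map] at h
        obtain ⟨a, _, rfl⟩ := h
        intro t ht j hj
        subst hj
        simp at ht)
    (by intro args h
        obtain ⟨a, c, rfl⟩ := mem_layerTwo _ _ _ _ h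
        exact goal_bounded _ _ _)
  refine ⟨Q, ?_, ?_⟩
  · rw [hr]
    unfold layerTwo targetValues
    rw [List.map_append, List.map_flatMap, List.map_map]
    congr 1
    · apply List.map_congr_left
      intro p _
      simp only [Function.comp, edgeStmt]
      split_ifs
      · exact goal_value _ _ _
      · rw [goal_value]; abel
    · simp only [List.map_cons, List.map_nil, goal_value]
  · have hE : G.edgeFinset.card = L.length := by
      have : G.edgeFinset = (L.map fun p => s(p.1, p.2)).toFinset := by
        ext e
        induction e using Sym2.ind with
        | _ a b =>
          rw [SimpleGraph.mem_edgeFinset, SimpleGraph.mem_edgeSet, List.mem_toFinset]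
          constructor
          · exact hLall a b
          · intro h
            obtain ⟨p, hp, he⟩ := List.mem_map.1 h
            have := hLadj p hp
            rw [← SimpleGraph.mem_edgeSet] at this ⊢
            rwa [← he]
      rw [this, List.toFinset_card_of_nodup hLN, List.length_map]
    have hN : Fintype.card N = nodes.length := by
      rw [← List.toFinset_card_of_nodup hnodesN, ← Finset.card_univ]
      congr 1
      ext a; simp [hnodesA]
    have hF : (nodes.filter (· ∈ X.toList)).length = k := by
      rw [← hk, ← List.toFinset_card_of_nodup (hnodesN.filter _)]
      congr 1
      ext a; simp [hnodesA]
    have h1 : ((layerOne X.toList).map fun args => args.length + 1).sum = 3 * k := by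
      simp [layerOne, Function.comp_def, hk, mul_comm]
    have h2 := cost_edges X.toList L hsym
    have h3 := cost_local X.toList nodes
    rw [hF] at h3
    unfold MultiSLP.costM
    rw [hs, layerTwo, List.map_append, List.sum_append, List.map_append, List.sum_append, hE, hN,
      h1, h2]
    omega
end

section
/- Let G be a finite simple graph with node set N and edge set E. Every MultiSLP Q that is equivalent to P_G satisfies #_M(Q) ≥ 3·|E| + 8·|N| + τ(G), where τ(G) is the minimum vertex cover number of G. -/
/-- The minimum vertex-cover number `τ(G)` of a finite simple graph `G`. -/
noncomputable def tau {N : Type} [Fintype N] [DecidableEq N] (G : SimpleGraph N) : ℕ :=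
  sInf {k | ∃ X : Finset N, (∀ a b : N, G.Adj a b → a ∈ X ∨ b ∈ X) ∧ X.card = k}

namespace SLPProof

def run {C : Type} [DecidableEq C] (l : List (List (Term C))) : List (C → ZMod 2) :=
  l.foldl (fun env args => env ++ [(args.map (Term.eval env)).sum]) []

theorem run_append {C : Type} [DecidableEq C] (l : List (List (Term C))) (a : List (Term C)) :
    run (l ++ [a]) = run l ++ [(a.map (Term.eval (run l))).sum] := by
  simp [run, List.foldl_append]

theorem run_length {C : Type} [DecidableEq C] (l : List (List (Term C))) :
    (run l).length = l.length := by
  induction l using List.reverseRecOn with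
  | nil => rfl
  | append_singleton l a ih => simp [run_append, ih]

theorem run_spec {C : Type} [DecidableEq C] (l : List (List (Term C)))
    (wf : ∀ i, i < l.length → ∀ t ∈ l.getD i [], ∀ j, t = Term.var j → j < i) :
    ∀ i, i < l.length → (run l).getD i 0 = ((l.getD i []).map (Term.eval (run l))).sum := by
  induction l using List.reverseRecOn with
  | nil => intro i hi; simp at hi
  | append_singleton l a ih =>
    have key : ∀ (i : ℕ), i ≤ l.length → ∀ ts : List (Term C),
        (∀ t ∈ ts, ∀ j, t = Term.var j → j < i) →
        ts.map (Term.eval (run (l ++ [a]))) = ts.map (Term.eval (run l)) := by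
      intro i hi ts hts
      apply List.map_congr_left
      intro t ht
      cases t with
      | const c => rfl
      | var j =>
        have := hts _ ht j rfl
        simp only [Term.eval, run_append]
        rw [List.getD_append]
        rw [run_length]; omega
    intro i hi
    rw [key i (by simp at hi; omega) _ (wf i hi)]
    by_cases h : i < l.length
    · rw [run_append, List.getD_append _ _ _ _ (by rw [run_length]; exact h),
        List.getD_append _ _ _ _ h]
      apply ih _ i h
      intro k hk t ht j hj
      exact wf k (by simp; omega) t (by rw [List.getD_append _ _ _ _ hk]; exact ht) j hj
    · have : i = l.length := by simp at hi; omega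
      subst this
      rw [run_append, List.getD_append_right _ _ _ _ (by rw [run_length]),
        List.getD_append_right _ _ _ _ (le_refl _)]
      simp [run_length]

theorem value_spec {C : Type} [DecidableEq C] (Q : MultiSLP C) (i : ℕ) (hi : i < Q.stmts.length) :
    Q.value i = ((Q.stmts.getD i []).map (Term.eval Q.envList)).sum :=
  run_spec Q.stmts Q.wfStmts i hi

/-! Vectors -/

abbrev Vec (N : Type) := Const N → ZMod 2

theorem vadd_self {N : Type} (v : Vec N) : v + v = 0 := by
  funext c; exact CharTwo.add_self_eq_zero _

theorem eq_add_of {N : Type} {u v w : Vec N} (h : u + v = w) : u = v + w := by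
  rw [← h, add_comm u v, ← add_assoc, vadd_self, zero_add]

instance instFin {N : Type} [Fintype N] [DecidableEq N] : Fintype (Const N) where
  elems := {Const.rho} ∪ Finset.univ.image Const.node ∪ Finset.univ.image Const.lam
    ∪ Finset.univ.image Const.mu
  complete := by intro x; cases x <;> simp

/-- parity -/
def par {N : Type} [Fintype N] [DecidableEq N] (v : Vec N) : ZMod 2 := ∑ c, v c

theorem par_add {N : Type} [Fintype N] [DecidableEq N] (v w : Vec N) :
    par (v + w) = par v + par w := by simp [par, Finset.sum_add_distrib]

theorem par_e {N : Type} [Fintype N] [DecidableEq N] (c : Const N) : par (eConst c) = 1 := by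
  simp [par, eConst]

def val {N : Type} [DecidableEq N] (p : Const N × Const N) : Vec N :=
  eConst Const.rho + eConst p.1 + eConst p.2

theorem par_val {N : Type} [Fintype N] [DecidableEq N] (p : Const N × Const N) :
    par (val p) = 1 := by
  simp only [val, par_add, par_e]; decide

/-- `y` is a local node of `a`. -/
def Loc {N : Type} (a : N) (y : Const N) : Prop := y = Const.lam a ∨ y = Const.mu a

/-- potential edges of `G_modif`. -/
def IsG {N : Type} (p : Const N × Const N) : Prop :=
  ∃ a, p.1 = Const.node a ∧ (Loc a p.2 ∨ ∃ b, b ≠ a ∧ p.2 = Const.node b)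

/-- edge captured by the subspace -/
def Good {N : Type} [DecidableEq N] (W : Submodule (ZMod 2) (Vec N)) (p : Const N × Const N) :
    Prop :=
  eConst p.2 ∈ W ∨ eConst p.1 + eConst p.2 ∈ W ∨ ((∃ b, p.2 = Const.node b) ∧ eConst p.1 ∈ W)

def Served {N : Type} [DecidableEq N] (u : Vec N) (p : Const N × Const N) : Prop :=
  (∃ c, u + val p = eConst c) ∨ (∃ p', IsG p' ∧ val p' ≠ val p ∧ u + val p = val p')

theorem e_apply {N : Type} [DecidableEq N] (c d : Const N) :
    eConst c d = if d = c then 1 else 0 := rfl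

/-- two sums of two basis vectors -/
theorem two_eq {N : Type} [DecidableEq N] {p q a b : Const N}
    (hpq : p ≠ q) (h : eConst p + eConst q = eConst a + eConst b) :
    (p = a ∧ q = b) ∨ (p = b ∧ q = a) := by
  have h1 := congrFun h p
  have h2 := congrFun h q
  simp only [Pi.add_apply, e_apply, if_true, if_neg hpq, if_neg hpq.symm] at h1 h2
  by_cases pa : p = a <;> by_cases pb : p = b <;> by_cases qa : q = a <;> by_cases qb : q = b <;>
    simp_all

theorem serve4 {N : Type} [DecidableEq N] {u : Vec N} (hu : ∀ a b, u ≠ eConst a + eConst b)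
    {p : Const N × Const N} (hp : IsG p) (hs : Served u p) : u p.1 = 1 ∧ u p.2 = 1 := by
  obtain ⟨x, y⟩ := p
  have hxy : x ≠ y ∧ x ≠ Const.rho ∧ y ≠ Const.rho := by
    obtain ⟨a, h1, h2⟩ := hp
    simp only [Loc] at h1 h2
    subst h1
    rcases h2 with (h2 | h2) | ⟨b, hb, h2⟩ <;> subst h2 <;> simp
    exact fun h => hb h.symm
  obtain ⟨h1, h2, h3⟩ := hxy
  rcases hs with ⟨c, hc⟩ | ⟨⟨z, w⟩, hg, hne, hc⟩
  · have hu' := eq_add_of hc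
    simp only [val] at hu'
    have hcx : c ≠ x := by
      rintro rfl
      apply hu Const.rho y
      rw [hu']
      have := vadd_self (eConst c)
      linear_combination this
    have hcy : c ≠ y := by
      rintro rfl
      apply hu Const.rho x
      rw [hu']
      have := vadd_self (eConst c)
      linear_combination this
    rw [hu']
    simp [e_apply, h1, h2, h3, h1.symm, hcx.symm, hcy.symm]
  · have hu' := eq_add_of hc
    simp only [val] at hu'
    have hr := vadd_self (eConst (Const.rho : Const N))
    have hzx : z ≠ x := by
      rintro rfl
      apply hu w y
      rw [hu']
      have := vadd_self (eConst z)
      linear_combination this + hr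
    have hzy : z ≠ y := by
      rintro rfl
      apply hu w x
      rw [hu']
      have := vadd_self (eConst z)
      linear_combination this + hr
    have hwx : w ≠ x := by
      rintro rfl
      apply hu z y
      rw [hu']
      have := vadd_self (eConst w)
      linear_combination this + hr
    have hwy : w ≠ y := by
      rintro rfl
      apply hu z x
      rw [hu']
      have := vadd_self (eConst w)
      linear_combination this + hr
    rw [hu']
    simp [e_apply, h1, h2, h3, h1.symm, hzx.symm, hzy.symm, hwx.symm, hwy.symm]

theorem pair_lemma {C : Type} [DecidableEq C] {x y z w : C} (n1 : x ≠ y)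
    (e1 : (if x = z then (1 : ZMod 2) else 0) + (if x = w then 1 else 0) = 1)
    (e2 : (if y = z then (1 : ZMod 2) else 0) + (if y = w then 1 else 0) = 1) :
    (x = z ∧ y = w) ∨ (x = w ∧ y = z) := by
  have h0 : ¬ ((1 : ZMod 2) + 1 = 1) := by decide
  have h1 : ¬ ((0 : ZMod 2) + 0 = 1) := by decide
  split_ifs at e1 e2 with a b c d
  all_goals first | exact (h0 e1).elim | exact (h0 e2).elim | exact (h1 e1).elim | exact (h1 e2).elim | skip
  all_goals first | exact Or.inl ⟨by assumption, by assumption⟩ | exact Or.inr ⟨by assumption, by assumption⟩ | skip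
  all_goals (exfalso; apply n1; simp_all)

theorem four_form {N : Type} [DecidableEq N] {u : Vec N} {p : Const N × Const N}
    (hs : Served u p) : ∃ a b c d, u = eConst a + eConst b + eConst c + eConst d := by
  rcases hs with ⟨c, hc⟩ | ⟨⟨z, w⟩, hg, hne, hc⟩
  · exact ⟨_, _, _, c, eq_add_of hc⟩
  · refine ⟨p.1, p.2, z, w, ?_⟩
    rw [eq_add_of hc]
    have hr := vadd_self (eConst (Const.rho : Const N))
    simp only [val]
    linear_combination hr

theorem IsG.ne {N : Type} {p : Const N × Const N} (hp : IsG p) :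
    p.1 ≠ p.2 ∧ p.1 ≠ Const.rho ∧ p.2 ≠ Const.rho := by
  obtain ⟨x, y⟩ := p
  obtain ⟨a, h1, h2⟩ := hp
  simp only [Loc] at h1 h2
  subst h1
  rcases h2 with (h2 | h2) | ⟨b, hb, h2⟩ <;> subst h2 <;> simp
  exact fun h => hb h.symm

theorem served_ne_zero {N : Type} [DecidableEq N] {u : Vec N} {p : Const N × Const N}
    (hp : IsG p) (hs : Served u p) : u ≠ 0 := by
  rintro rfl
  obtain ⟨h1, h2, h3⟩ := hp.ne
  rcases hs with ⟨c, hc⟩ | ⟨p', hg, hne, hc⟩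
  · rw [zero_add] at hc
    have e1 := congrFun hc p.1
    have e2 := congrFun hc p.2
    simp [val, e_apply, h1, h2, h3, h1.symm] at e1 e2
    exact h1 (e1.trans e2.symm)
  · rw [zero_add] at hc
    exact hne hc.symm

/-- swapped version of values: if a goal takes value one at a local node, it is that local edge -/
theorem val_at_loc {N : Type} [DecidableEq N] {p : Const N × Const N} (hp : IsG p) {a : N}
    {y : Const N} (hy : Loc a y) (h : val p y = 1) : p = (Const.node a, y) := by
  obtain ⟨x, z⟩ := p
  obtain ⟨b, h1, h2⟩ := hp
  simp only [Loc] at h1 h2 hy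
  subst h1
  rcases h2 with (h2 | h2) | ⟨b, hb, h2⟩ <;> subst h2 <;> rcases hy with hy | hy <;> subst hy <;>
    simp_all [val, e_apply]

theorem key {N : Type} [DecidableEq N] (u : Vec N) :
    ∃ B : Finset (Vec N), B.card ≤ 3 ∧ ∀ W : Submodule (ZMod 2) (Vec N),
      eConst Const.rho ∈ W → (∀ b ∈ B, b ∈ W) →
        u ∈ W ∧ ∀ p, IsG p → Served u p → Good W p := by
  classical
  by_cases hex : ∃ p, IsG p ∧ Served u p
  swap
  · refine ⟨{u}, by simp, fun W _ hB => ⟨hB u (by simp), fun p hp hs => (hex ⟨p, hp, hs⟩).elim⟩⟩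
  obtain ⟨p0, hp0, hs0⟩ := hex
  have hu0 := served_ne_zero hp0 hs0
  by_cases h2 : ∃ a b, u = eConst a + eConst b
  · obtain ⟨p, q, hu⟩ := h2
    have hpq : p ≠ q := by
      rintro rfl
      exact hu0 (by rw [hu, vadd_self])
    by_cases hsp : ∃ a, u = eConst Const.rho + eConst (Const.node a)
    · obtain ⟨a, ha⟩ := hsp
      refine ⟨{eConst (Const.node a), eConst (Const.lam a), eConst (Const.mu a)},
        Finset.card_le_three, fun W hr hB => ?_⟩
      have ba : eConst (Const.node a) ∈ W := hB _ (by simp)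
      have bl : eConst (Const.lam a) ∈ W := hB _ (by simp)
      have bm : eConst (Const.mu a) ∈ W := hB _ (by simp)
      refine ⟨by rw [ha]; exact W.add_mem hr ba, ?_⟩
      rintro ⟨x, y⟩ hg hs
      obtain ⟨n1, n2, n3⟩ := hg.ne
      rcases hs with ⟨c, hc⟩ | ⟨p', hg', hne, hc⟩
      · have hor : x = Const.node a ∨ y = Const.node a := by
          by_contra hcon
          push Not at hcon
          have e1 := congrFun hc x
          have e2 := congrFun hc y
          simp [ha, val, e_apply, hcon.1, hcon.2, n2, n3, show x ≠ y from n1, (show x ≠ y from n1).symm] at e1 e2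
          exact n1 (e1.trans e2.symm)
        rcases hor with h | h
        · subst h
          obtain ⟨b, hb1, hb2⟩ := hg
          simp at hb1
          subst hb1
          rcases hb2 with (hl | hl) | ⟨b, -, hl⟩
          · left; rw [hl]; exact bl
          · left; rw [hl]; exact bm
          · right; right; exact ⟨⟨b, hl⟩, ba⟩
        · left; show eConst y ∈ W; rw [h]; exact ba
      · exfalso
        have e1 := congrFun hc Const.rho
        obtain ⟨m1, m2, m3⟩ := hg'.ne
        simp [ha, val, e_apply, n2.symm, n3.symm, m2.symm, m3.symm] at e1
    · refine ⟨{eConst p, eConst q}, Finset.card_le_two.trans (by norm_num), fun W hr hB => ?_⟩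
      have bp : eConst p ∈ W := hB _ (by simp)
      have bq : eConst q ∈ W := hB _ (by simp)
      refine ⟨by rw [hu]; exact W.add_mem bp bq, ?_⟩
      rintro ⟨x, y⟩ hg hs
      obtain ⟨n1, n2, n3⟩ := hg.ne
      by_cases hy : y = p ∨ y = q
      · left
        rcases hy with rfl | rfl <;> assumption
      push Not at hy
      obtain ⟨a, hxa, hcase⟩ := id hg
      simp only at hxa hcase n1 n2 n3
      rcases hcase with hl | ⟨b, hb, hyb⟩
      · exfalso
        rcases hs with ⟨c, hc⟩ | ⟨p', hg', hne, hc⟩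
        · have e := congrFun hc y
          simp [hu, val, e_apply, hy.1, hy.2, n3, n1.symm] at e
          subst e
          apply hsp
          refine ⟨a, ?_⟩
          rw [eq_add_of hc]
          have := vadd_self (eConst y)
          simp only [val, hxa]
          linear_combination this
        · have e := congrFun hc y
          simp only [hu, val, Pi.add_apply, e_apply, hy.1, hy.2, n3, n1.symm, if_true, if_false]
            at e
          have := val_at_loc hg' hl (by simpa [val, e_apply, n3] using e.symm)
          apply hne
          rw [this, hxa]
      · by_cases hx : x = p ∨ x = q
        · right; right
          refine ⟨⟨b, hyb⟩, ?_⟩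
          rcases hx with rfl | rfl <;> assumption
        push Not at hx
        exfalso
        rcases hs with ⟨c, hc⟩ | ⟨⟨z, w⟩, hg', hne, hc⟩
        · have e1 := congrFun hc x
          have e2 := congrFun hc y
          simp [hu, val, e_apply, hy.1, hy.2, hx.1, hx.2, n2, n3, n1, n1.symm] at e1 e2
          exact n1 (e1.trans e2.symm)
        · have e1 := congrFun hc x
          have e2 := congrFun hc y
          obtain ⟨m1, m2, m3⟩ := hg'.ne
          simp only at m1 m2 m3
          simp only [hu, val, Pi.add_apply, e_apply, hy.1, hy.2, hx.1, hx.2, n2, n3, n1, n1.symm,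
            if_true, if_false] at e1 e2
          apply hne
          have hxzw : (x = z ∧ y = w) ∨ (x = w ∧ y = z) :=
            pair_lemma n1 (by simpa using e1.symm) (by simpa using e2.symm)
          rcases hxzw with ⟨rfl, rfl⟩ | ⟨rfl, rfl⟩
          · rfl
          · simp only [val]; ring
  · obtain ⟨a, b, c, d, hu⟩ := four_form hs0
    push Not at h2
    refine ⟨{eConst a + eConst b, eConst a + eConst c, eConst a + eConst d},
      Finset.card_le_three, fun W hr hB => ?_⟩
    have hb : eConst a + eConst b ∈ W := hB _ (by simp)
    have hc : eConst a + eConst c ∈ W := hB _ (by simp)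
    have hd : eConst a + eConst d ∈ W := hB _ (by simp)
    have haa := vadd_self (eConst a)
    constructor
    · have := W.add_mem (W.add_mem hb hc) hd
      convert this using 1
      rw [hu]
      linear_combination -haa
    · rintro ⟨x, y⟩ hg hs
      have h4 := serve4 h2 hg hs
      have mem : ∀ z, u z = 1 → eConst a + eConst z ∈ W := by
        intro z hz
        have : z = a ∨ z = b ∨ z = c ∨ z = d := by
          by_contra hcon
          push Not at hcon
          simp [hu, e_apply, hcon] at hz
        rcases this with rfl | rfl | rfl | rfl
        · rw [haa]; exact W.zero_mem
        all_goals assumption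
      right; left
      have := W.add_mem (mem x h4.1) (mem y h4.2)
      convert this using 1
      simp only
      linear_combination -haa

theorem dim_bound {N : Type} [Fintype N] [DecidableEq N] (Gens : Finset (Vec N))
    (D : Finset (Const N)) (hr : eConst Const.rho ∈ Submodule.span (ZMod 2) (Gens : Set (Vec N)))
    (hD : ∀ y ∈ D, ∃ a, Loc a y ∧
      (eConst y ∈ Submodule.span (ZMod 2) (Gens : Set (Vec N)) ∨
        eConst (Const.node a) + eConst y ∈ Submodule.span (ZMod 2) (Gens : Set (Vec N)))) :
    ∃ X : Finset N, (∀ a b, a ≠ b →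
        Good (Submodule.span (ZMod 2) (Gens : Set (Vec N))) (Const.node a, Const.node b) →
        a ∈ X ∨ b ∈ X) ∧ 1 + D.card + X.card ≤ Gens.card := by
  classical
  set W := Submodule.span (ZMod 2) (Gens : Set (Vec N)) with hW
  let st : Setoid N := Setoid.ker (fun a : N => W.mkQ (eConst (Const.node a)))
  let rep : N → N := fun a => (Quotient.mk st a).out
  have hrep : ∀ a, W.mkQ (eConst (Const.node (rep a))) = W.mkQ (eConst (Const.node a)) := by
    intro a
    exact Quotient.exact (s := st) (Quotient.out_eq (Quotient.mk st a))
  have hrep' : ∀ a b, W.mkQ (eConst (Const.node a)) = W.mkQ (eConst (Const.node b)) →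
      rep a = rep b := by
    intro a b h
    have : Quotient.mk st a = Quotient.mk st b := Quotient.sound (s := st) h
    simp only [rep, this]
  have hneg : ∀ v : Vec N, -v = v := fun v => neg_eq_of_add_eq_zero_left (vadd_self v)
  have hq : ∀ v w : Vec N, W.mkQ v = W.mkQ w ↔ v + w ∈ W := by
    intro v w
    rw [Submodule.mkQ_apply, Submodule.mkQ_apply, Submodule.Quotient.eq, sub_eq_add_neg, hneg]
  let X : Finset N := Finset.univ.filter fun a => eConst (Const.node a) ∈ W ∨ rep a ≠ a
  refine ⟨X, ?_, ?_⟩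
  · intro a b hab hg
    by_contra hcon
    push Not at hcon
    simp only [X, Finset.mem_filter, Finset.mem_univ, true_and, not_or, not_not] at hcon
    rcases hg with hg | hg | ⟨-, hg⟩
    · exact hcon.2.1 hg
    · have := hrep' a b ((hq _ _).2 hg)
      exact hab (by rw [← hcon.1.2, ← hcon.2.2, this])
    · exact hcon.1.1 hg
  let T : Finset (Const N) := ({Const.rho} ∪ D) ∪ X.image Const.node
  have hT : T.card = 1 + D.card + X.card := by
    rw [Finset.card_union_of_disjoint, Finset.card_union_of_disjoint,
      Finset.card_image_of_injective, Finset.card_singleton]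
    · intro a b h; exact Const.node.inj h
    · rw [Finset.disjoint_left]
      intro y hy hy'
      simp at hy
      obtain ⟨a, ha, -⟩ := hD y hy'
      rcases ha with h | h <;> simp [h] at hy
    · rw [Finset.disjoint_left]
      intro y hy hy'
      simp at hy hy'
      obtain ⟨b, -, hb⟩ := hy'
      rcases hy with hy | hy
      · simp [hy] at hb
      · obtain ⟨a, ha, -⟩ := hD y hy
        rcases ha with h | h <;> simp [h] at hb
  let F : Finset (Vec N) := Gens ∪ Tᶜ.image eConst
  let U := Submodule.span (ZMod 2) (F : Set (Vec N))
  have hWU : W ≤ U := Submodule.span_mono (by simp [F])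
  have hTc : ∀ c, c ∉ T → eConst c ∈ U := by
    intro c hc
    apply Submodule.subset_span
    simp only [F, Finset.coe_union, Set.mem_union]
    right
    simp only [Finset.coe_image]
    exact ⟨c, by simpa using hc, rfl⟩
  have hnode : ∀ a, eConst (Const.node a) ∈ U := by
    intro a
    by_cases h : eConst (Const.node a) ∈ W
    · exact hWU h
    have hra : eConst (Const.node (rep a)) ∈ U := by
      apply hTc
      have h1 : rep (rep a) = rep a := hrep' _ _ (hrep a)
      have h2 : eConst (Const.node (rep a)) ∉ W := by
        intro h2
        have h3 := W.add_mem ((hq _ _).1 (hrep a)) h2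
        apply h
        convert h3 using 1
        have := vadd_self (eConst (Const.node (rep a)))
        linear_combination -this
      intro hm
      simp only [T, Finset.mem_union, Finset.mem_singleton, Finset.mem_image] at hm
      rcases hm with (hm | hm) | ⟨b, hb, hm⟩
      · simp at hm
      · obtain ⟨b, hb, -⟩ := hD _ hm
        rcases hb with hb | hb <;> simp at hb
      · simp only [Const.node.injEq] at hm
        subst hm
        simp [X, h1, h2] at hb
    have h3 := U.add_mem (hWU ((hq _ _).1 (hrep a))) hra
    convert h3 using 1
    have := vadd_self (eConst (Const.node (rep a)))
    linear_combination -this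
  have hall : ∀ c, eConst c ∈ U := by
    intro c
    by_cases hc : c ∈ T
    swap
    · exact hTc c hc
    simp only [T, Finset.mem_union, Finset.mem_singleton, Finset.mem_image] at hc
    rcases hc with (rfl | hc) | ⟨b, hb, rfl⟩
    · exact hWU hr
    · obtain ⟨a, -, h | h⟩ := hD c hc
      · exact hWU h
      · have h3 := U.add_mem (hWU h) (hnode a)
        convert h3 using 1
        have := vadd_self (eConst (Const.node a))
        linear_combination -this
    · exact hnode b
  have htop : U = ⊤ := by
    rw [eq_top_iff]
    intro v _
    have : v = ∑ c, v c • eConst c := by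
      funext d
      simp [Finset.sum_apply, e_apply]
    rw [this]
    exact U.sum_mem fun c _ => U.smul_mem _ (hall c)
  have hfr : Module.finrank (ZMod 2) U ≤ F.card := finrank_span_finset_le_card F
  rw [htop, finrank_top, Module.finrank_fintype_fun_eq_card] at hfr
  have h1 : F.card ≤ Gens.card + Tᶜ.card :=
    (Finset.card_union_le _ _).trans (Nat.add_le_add_left Finset.card_image_le _)
  have h2 : T.card + Tᶜ.card = Fintype.card (Const N) := Finset.card_add_card_compl T
  omega

theorem sum_getD {α : Type} (d : α) (f : α → ℕ) (l : List α) :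
    (l.map f).sum = ∑ i ∈ Finset.range l.length, f (l.getD i d) := by
  induction l with
  | nil => simp
  | cons a l ih => simp [Finset.sum_range_succ', ih, add_comm]

theorem val_inj {N : Type} [DecidableEq N] {p p' : Const N × Const N} (hp : IsG p)
    (h : val p = val p') : p = p' ∨ (p.1 = p'.2 ∧ p.2 = p'.1) := by
  have h' : eConst p.1 + eConst p.2 = eConst p'.1 + eConst p'.2 := by
    simp only [val] at h
    linear_combination h
  rcases two_eq hp.ne.1 h' with h | h
  · exact Or.inl (Prod.ext h.1 h.2)
  · exact Or.inr h

theorem cheap_good {N : Type} [Fintype N] [DecidableEq N]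
    (Q : MultiSLP (Const N)) (P : Finset (Const N × Const N)) (sel : Const N × Const N → ℕ)
    (hG : ∀ p ∈ P, IsG p) (hinj : ∀ p ∈ P, ∀ p' ∈ P, val p = val p' → p = p')
    (hsel : ∀ p ∈ P, sel p < Q.stmts.length ∧ Q.value (sel p) = val p)
    (B : Vec N → Finset (Vec N))
    (hB : ∀ u, ∀ W : Submodule (ZMod 2) (Vec N),
      eConst Const.rho ∈ W → (∀ b ∈ B u, b ∈ W) →
        u ∈ W ∧ ∀ p, IsG p → Served u p → Good W p)
    (W : Submodule (ZMod 2) (Vec N)) (hr : eConst Const.rho ∈ W)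
    (hW : ∀ i < Q.stmts.length, i ∉ P.image sel → ∀ b ∈ B (Q.value i), b ∈ W)
    (p : Const N × Const N) (hp : p ∈ P) (h2 : (Q.stmts.getD (sel p) []).length = 2) :
    Good W p := by
  obtain ⟨s, t, hst⟩ := List.length_eq_two.1 h2
  obtain ⟨hlt, hv⟩ := hsel p hp
  have hval := value_spec Q (sel p) hlt
  rw [hst, hv] at hval
  simp only [List.map_cons, List.map_nil, List.sum_cons, List.sum_nil, add_zero] at hval
  let K : Vec N → Prop := fun v => (∃ c, v = eConst c) ∨
    (∃ p', p' ∈ P ∧ val p' ≠ val p ∧ v = val p')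
  have cls : ∀ r ∈ [s, t], K (Term.eval Q.envList r) ∨
      ∃ j < Q.stmts.length, j ∉ P.image sel ∧ Term.eval Q.envList r = Q.value j := by
    intro r hrm
    cases r with
    | const c => exact Or.inl (Or.inl ⟨c, rfl⟩)
    | var j =>
      have hj : j < sel p := Q.wfStmts _ hlt _ (by rw [hst]; exact hrm) j rfl
      by_cases hjs : j ∈ P.image sel
      · left; right
        obtain ⟨p', hp', rfl⟩ := Finset.mem_image.1 hjs
        refine ⟨p', hp', ?_, (hsel p' hp').2⟩
        intro h
        rw [hinj _ hp' _ hp h] at hj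
        exact lt_irrefl _ hj
      · exact Or.inr ⟨j, hj.trans hlt, hjs, rfl⟩
  have hK : ∀ v, K v → par v = 1 := by
    rintro v (⟨c, rfl⟩ | ⟨p', -, -, rfl⟩)
    · exact par_e c
    · exact par_val p'
  have mixed : ∀ j < Q.stmts.length, j ∉ P.image sel → ∀ v, K v → Q.value j + v = val p →
      Good W p := by
    intro j hj hjs v hv h
    refine (hB (Q.value j) W hr (hW j hj hjs)).2 p (hG p hp) ?_
    have h' : Q.value j + val p = v := by
      rw [← h, ← add_assoc, vadd_self, zero_add]
    rcases hv with ⟨c, rfl⟩ | ⟨p', hp', hne, rfl⟩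
    · exact Or.inl ⟨c, h'⟩
    · exact Or.inr ⟨p', hG p' hp', hne, h'⟩
  rcases cls s (by simp) with hs | ⟨j, hj, hjs, hs⟩ <;>
    rcases cls t (by simp) with ht | ⟨k, hk, hks, ht⟩
  · exfalso
    have := congrArg par hval
    rw [par_add, hK _ hs, hK _ ht, par_val] at this
    exact absurd this (by decide)
  · exact mixed k hk hks _ hs (by rw [hval, ht, add_comm])
  · exact mixed j hj hjs _ ht (by rw [hval, hs])
  · right; left
    have h1 := (hB (Q.value j) W hr (hW j hj hjs)).1
    have h3 := (hB (Q.value k) W hr (hW k hk hks)).1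
    have h4 := W.add_mem (W.add_mem h1 h3) hr
    rw [← hs, ← ht, ← hval] at h4
    convert h4 using 1
    have := vadd_self (eConst (Const.rho : Const N))
    simp only [val]
    linear_combination -this

end SLPProof

/-- **Lower bound for the memory-access cost.**  Let `G` be a finite simple graph with
node set `N` and edge set `E` (enumerated without repetition by `L`; `nodes` enumerates
`N`).  Every MultiSLP `Q` equivalent to `P_G` satisfies
`#_M(Q) ≥ 3·|E| + 8·|N| + τ(G)`, where `τ(G)` is the minimum vertex-cover number. -/
theorem multislp_cost_lower_bound {N : Type} [Fintype N] [DecidableEq N]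
    (G : SimpleGraph N) [DecidableRel G.Adj]
    (L : List (N × N)) (nodes : List N)
    (hnodesN : nodes.Nodup) (hnodesA : ∀ a : N, a ∈ nodes)
    (hLN : (L.map fun p => s(p.1, p.2)).Nodup)
    (hLadj : ∀ p ∈ L, G.Adj p.1 p.2)
    (hLall : ∀ a b : N, G.Adj a b → s(a, b) ∈ L.map fun p => s(p.1, p.2))
    (Q : MultiSLP (Const N)) (hQ : Q.result = targetValues L nodes) :
    3 * G.edgeFinset.card + 8 * Fintype.card N + tau G ≤ Q.costM := by
  classical
  let f : N × N → Const N × Const N := fun q => (Const.node q.1, Const.node q.2)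
  let fl : N → Const N × Const N := fun a => (Const.node a, Const.lam a)
  let fm : N → Const N × Const N := fun a => (Const.node a, Const.mu a)
  have hf : Function.Injective f := by
    rintro ⟨a, b⟩ ⟨c, d⟩ h; simpa [f] using h
  have hfl : Function.Injective fl := by
    intro a b h; simpa [fl] using h
  have hfm : Function.Injective fm := by
    intro a b h; simpa [fm] using h
  let PE := L.toFinset.image f
  let PL := Finset.univ.image fl ∪ Finset.univ.image fm
  let P := PE ∪ PL
  have memPL : ∀ p ∈ PL, ∃ a, p.1 = Const.node a ∧ SLPProof.Loc a p.2 := by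
    intro p hp
    simp only [PL, Finset.mem_union, Finset.mem_image, Finset.mem_univ, true_and] at hp
    rcases hp with ⟨a, rfl⟩ | ⟨a, rfl⟩
    · exact ⟨a, rfl, Or.inl rfl⟩
    · exact ⟨a, rfl, Or.inr rfl⟩
  have memPE : ∀ p ∈ PE, ∃ q ∈ L, f q = p := by
    intro p hp
    simpa [PE] using hp
  have hdisj : Disjoint PE PL := by
    rw [Finset.disjoint_left]
    intro p h1 h2
    obtain ⟨a, -, h⟩ := memPL p h2
    obtain ⟨q, -, rfl⟩ := memPE p h1
    rcases h with h | h <;> simp [f] at h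
  have cPL : PL.card = 2 * Fintype.card N := by
    rw [Finset.card_union_of_disjoint, Finset.card_image_of_injective _ hfl,
      Finset.card_image_of_injective _ hfm, Finset.card_univ]
    · ring
    · rw [Finset.disjoint_left]
      intro p h1 h2
      simp only [Finset.mem_image, Finset.mem_univ, true_and] at h1 h2
      obtain ⟨a, rfl⟩ := h1
      obtain ⟨b, hb⟩ := h2
      simp [fl, fm] at hb
  have hsinj := List.inj_on_of_nodup_map hLN
  have cPE : PE.card = G.edgeFinset.card := by
    rw [Finset.card_image_of_injective _ hf]
    have : L.toFinset.image (fun p => s(p.1, p.2)) = G.edgeFinset := by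
      ext e
      induction e with
      | _ a b =>
        simp only [Finset.mem_image, List.mem_toFinset, SimpleGraph.mem_edgeFinset,
          SimpleGraph.mem_edgeSet]
        constructor
        · rintro ⟨q, hq, he⟩
          have := hLadj q hq
          rw [← SimpleGraph.mem_edgeSet, he] at this
          exact this
        · intro h
          simpa using hLall a b h
    rw [← this, Finset.card_image_of_injOn]
    intro a ha b hb h
    exact hsinj (by simpa using ha) (by simpa using hb) h
  have hG : ∀ p ∈ P, SLPProof.IsG p := by
    intro p hp
    rcases Finset.mem_union.1 hp with hp | hp
    · obtain ⟨q, hq, rfl⟩ := memPE p hp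
      exact ⟨q.1, rfl, Or.inr ⟨q.2, (hLadj q hq).ne', rfl⟩⟩
    · obtain ⟨a, h1, h2⟩ := memPL p hp
      exact ⟨a, h1, Or.inl h2⟩
  have hinj : ∀ p ∈ P, ∀ p' ∈ P, SLPProof.val p = SLPProof.val p' → p = p' := by
    intro p hp p' hp' h
    rcases SLPProof.val_inj (hG p hp) h with h | ⟨h1, h2⟩
    · exact h
    rcases Finset.mem_union.1 hp with hp | hp
    · rcases Finset.mem_union.1 hp' with hp' | hp'
      · obtain ⟨q, hq, rfl⟩ := memPE p hp
        obtain ⟨q', hq', rfl⟩ := memPE p' hp'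
        simp only [f, Const.node.injEq] at h1 h2
        have : q = q' := hsinj hq hq' (by
          show s(q.1, q.2) = s(q'.1, q'.2)
          rw [h1, h2, Sym2.eq_swap])
        rw [this]
      · obtain ⟨q, hq, rfl⟩ := memPE p hp
        obtain ⟨a, -, h | h⟩ := memPL p' hp' <;> rw [← h1] at h <;> simp [f] at h
    · obtain ⟨a, -, h⟩ := memPL p hp
      obtain ⟨b, hb, -⟩ := hG p' hp'
      rw [h2, hb] at h
      rcases h with h | h <;> simp at h
  have hex : ∀ p : Const N × Const N, ∃ i, p ∈ P →
      i < Q.stmts.length ∧ Q.value i = SLPProof.val p := by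
    intro p
    by_cases hp : p ∈ P
    swap
    · exact ⟨0, fun h => (hp h).elim⟩
    have hmem : SLPProof.val p ∈ Q.result := by
      rw [hQ, targetValues, List.mem_append]
      rcases Finset.mem_union.1 hp with hp | hp
      · left
        obtain ⟨q, hq, rfl⟩ := memPE p hp
        exact List.mem_map.2 ⟨q, hq, rfl⟩
      · right
        obtain ⟨a, h1, h2⟩ := memPL p hp
        refine List.mem_flatMap.2 ⟨a, hnodesA a, ?_⟩
        rcases h2 with h2 | h2 <;> simp [SLPProof.val, h1, h2]
    obtain ⟨t, ht, hv⟩ := List.mem_map.1 hmem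
    cases t with
    | const c =>
      exact (SLPProof.served_ne_zero (u := 0) (hG p hp)
        (Or.inl ⟨c, by rw [zero_add, ← hv]; rfl⟩) rfl).elim
    | var j => exact ⟨j, fun _ => ⟨Q.wfRet _ ht j rfl, hv⟩⟩
  choose sel hsel using hex
  choose B hBc hB using (SLPProof.key (N := N))
  have hselinj : Set.InjOn sel (P : Set (Const N × Const N)) := by
    intro p hp p' hp' h
    apply hinj p hp p' hp'
    rw [← (hsel p hp).2, ← (hsel p' hp').2, h]
  let S := P.image sel
  have hS : S ⊆ Finset.range Q.stmts.length := by
    intro i hi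
    obtain ⟨p, hp, rfl⟩ := Finset.mem_image.1 hi
    exact Finset.mem_range.2 (hsel p hp).1
  let R := Finset.range Q.stmts.length \ S
  let n : ℕ → ℕ := fun i => (Q.stmts.getD i []).length
  have hn : ∀ i < Q.stmts.length, 2 ≤ n i := by
    intro i hi
    apply Q.arity
    rw [List.getD_eq_getElem _ _ hi]
    exact List.getElem_mem hi
  let Gens : Finset (SLPProof.Vec N) :=
    {eConst Const.rho} ∪ R.biUnion fun i => B (Q.value i)
  have cGens : Gens.card ≤ 1 + 3 * R.card := by
    refine (Finset.card_union_le _ _).trans ?_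
    rw [Finset.card_singleton, mul_comm]
    exact Nat.add_le_add_left (Finset.card_biUnion_le_card_mul _ _ _ fun i _ => hBc _) _
  set W := Submodule.span (ZMod 2) (Gens : Set (SLPProof.Vec N)) with hW
  have hr : eConst Const.rho ∈ W := Submodule.subset_span (by simp [Gens])
  have hWB : ∀ i < Q.stmts.length, i ∉ P.image sel → ∀ b ∈ B (Q.value i), b ∈ W := by
    intro i hi his b hb
    apply Submodule.subset_span
    simp only [Gens, Finset.coe_union, Set.mem_union]
    right
    exact Finset.mem_coe.2 (Finset.mem_biUnion.2
      ⟨i, Finset.mem_sdiff.2 ⟨Finset.mem_range.2 hi, his⟩, hb⟩)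
  have hcheap : ∀ p ∈ P, n (sel p) = 2 → SLPProof.Good W p := fun p hp h2 =>
    SLPProof.cheap_good Q P sel hG hinj hsel B hB W hr hWB p hp h2
  let PLc := PL.filter fun p => n (sel p) = 2
  let D := PLc.image Prod.snd
  have cD : D.card = PLc.card := by
    apply Finset.card_image_of_injOn
    intro p hp p' hp' h
    obtain ⟨a, h1, h2⟩ := memPL p (Finset.mem_filter.1 hp).1
    obtain ⟨b, h3, h4⟩ := memPL p' (Finset.mem_filter.1 hp').1
    apply Prod.ext _ h
    rw [h1, h3]
    rw [h] at h2
    rcases h2 with h2 | h2 <;> rcases h4 with h4 | h4 <;> rw [h2] at h4 <;> simp at h4 <;> rw [h4]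
  obtain ⟨X, hX, hXc⟩ := SLPProof.dim_bound Gens D hr (by
    intro y hy
    obtain ⟨p, hp, rfl⟩ := Finset.mem_image.1 hy
    obtain ⟨hpL, hp2⟩ := Finset.mem_filter.1 hp
    obtain ⟨a, h1, h2⟩ := memPL p hpL
    refine ⟨a, h2, ?_⟩
    rcases hcheap p (Finset.mem_union_right _ hpL) hp2 with h | h | ⟨⟨b, hb⟩, -⟩
    · exact Or.inl h
    · rw [h1] at h; exact Or.inr h
    · rw [hb] at h2
      rcases h2 with h2 | h2 <;> simp at h2)
  let PEn := PE.filter fun p => n (sel p) ≠ 2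
  let PLn := PL.filter fun p => n (sel p) ≠ 2
  let LEn := L.toFinset.filter fun q => n (sel (f q)) ≠ 2
  have cLEn : LEn.card = PEn.card := by
    have : PEn = LEn.image f := by
      ext p
      simp only [PEn, LEn, PE, Finset.mem_filter, Finset.mem_image]
      constructor
      · rintro ⟨⟨q, hq, rfl⟩, h⟩; exact ⟨q, ⟨hq, h⟩, rfl⟩
      · rintro ⟨q, ⟨hq, h⟩, rfl⟩; exact ⟨⟨q, hq, rfl⟩, h⟩
    rw [this, Finset.card_image_of_injective _ hf]
  have htau : tau G ≤ X.card + PEn.card := by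
    refine le_trans (Nat.sInf_le (m := (X ∪ LEn.image Prod.fst).card)
      ⟨X ∪ LEn.image Prod.fst, ?_, rfl⟩) ?_
    · have main : ∀ q ∈ L, q.1 ∈ X ∪ LEn.image Prod.fst ∨ q.2 ∈ X ∪ LEn.image Prod.fst := by
        intro q hq
        by_cases h : n (sel (f q)) = 2
        · have hfP : f q ∈ P := Finset.mem_union_left _
            (Finset.mem_image_of_mem f (List.mem_toFinset.2 hq))
          rcases hX q.1 q.2 (hLadj q hq).ne (hcheap (f q) hfP h) with h | h
          · exact Or.inl (Finset.mem_union_left _ h)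
          · exact Or.inr (Finset.mem_union_left _ h)
        · left
          exact Finset.mem_union_right _ (Finset.mem_image_of_mem _
            (Finset.mem_filter.2 ⟨List.mem_toFinset.2 hq, h⟩))
      intro a b hab
      obtain ⟨q, hq, he⟩ := List.mem_map.1 (hLall a b hab)
      have := main q hq
      rcases Sym2.eq_iff.1 he with ⟨h1, h2⟩ | ⟨h1, h2⟩
      · rwa [h1, h2] at this
      · rw [h1, h2] at this; exact this.symm
    · refine (Finset.card_union_le _ _).trans ?_
      rw [← cLEn]
      exact Nat.add_le_add_left Finset.card_image_le _
  have cPLs : PLc.card + PLn.card = PL.card :=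
    Finset.card_filter_add_card_filter_not _
  have hcost : Q.costM = ∑ i ∈ Finset.range Q.stmts.length, (n i + 1) :=
    SLPProof.sum_getD [] (fun args => args.length + 1) Q.stmts
  have hsplit : ∑ i ∈ Finset.range Q.stmts.length, (n i + 1)
      = ∑ i ∈ R, (n i + 1) + ∑ i ∈ S, (n i + 1) := (Finset.sum_sdiff hS).symm
  have hRsum : 3 * R.card ≤ ∑ i ∈ R, (n i + 1) := by
    rw [mul_comm, ← smul_eq_mul]
    apply Finset.card_nsmul_le_sum
    intro i hi
    have := hn i (Finset.mem_range.1 (Finset.mem_sdiff.1 hi).1)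
    omega
  have hSsum : ∑ i ∈ S, (n i + 1) = ∑ p ∈ P, (n (sel p) + 1) :=
    Finset.sum_image hselinj
  have hpart : ∀ A ⊆ P, 3 * A.card + (A.filter fun p => n (sel p) ≠ 2).card
      ≤ ∑ p ∈ A, (n (sel p) + 1) := by
    intro A hA
    rw [Finset.card_filter, Finset.card_eq_sum_ones, Finset.mul_sum, ← Finset.sum_add_distrib]
    apply Finset.sum_le_sum
    intro p hp
    have := hn _ (hsel p (hA hp)).1
    split_ifs <;> omega
  have hPsum : ∑ p ∈ P, (n (sel p) + 1)
      = ∑ p ∈ PE, (n (sel p) + 1) + ∑ p ∈ PL, (n (sel p) + 1) := Finset.sum_union hdisj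
  have hE : 3 * PE.card + PEn.card ≤ _ := hpart PE Finset.subset_union_left
  have hL : 3 * PL.card + PLn.card ≤ _ := hpart PL Finset.subset_union_right
  omega
end

section
/- Let G be a finite simple graph with node set N and edge set E. Then the minimum of #_M(Q) over all MultiSLPs Q equivalent to P_G equals 3·|E| + 8·|N| + τ(G), where τ(G) is the minimum vertex cover number of G. Consequently, for the #_M-minimum MultiSLP Q equivalent to P_G, the number k := #_M(Q) − 3·|E| − 8·|N| is the size of a smallest vertex cover of G. -/
section Run
variable {C : Type} [DecidableEq C]

/-- One evaluation step. -/
def slpStep (env : List (C → ZMod 2)) (args : List (Term C)) : List (C → ZMod 2) :=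
  env ++ [(args.map (Term.eval env)).sum]

lemma run_prefix (l : List (List (Term C))) (env : List (C → ZMod 2)) :
    env <+: l.foldl slpStep env := by
  induction l generalizing env with
  | nil => simp
  | cons a l ih => exact (List.prefix_append _ _).trans (ih (slpStep env a))

lemma run_length (l : List (List (Term C))) (env : List (C → ZMod 2)) :
    (l.foldl slpStep env).length = env.length + l.length := by
  induction l generalizing env with
  | nil => simp
  | cons a l ih => simp only [List.foldl_cons, ih]; simp [slpStep]; omega

lemma envList_eq (P : MultiSLP C) : P.envList = P.stmts.foldl slpStep [] := rfl

lemma getD_of_prefix {α : Type*} {l₁ l₂ : List α} (h : l₁ <+: l₂) {j : ℕ} (hj : j < l₁.length)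
    (d : α) : l₁.getD j d = l₂.getD j d := by
  obtain ⟨r, rfl⟩ := h
  rw [List.getD_append _ _ _ _ hj]

lemma value_eq (P : MultiSLP C) (i : ℕ) (hi : i < P.stmts.length) :
    P.value i = ((P.stmts.getD i []).map (Term.eval P.envList)).sum := by
  set e := (P.stmts.take i).foldl slpStep [] with he
  have hel : e.length = i := by rw [he, run_length]; simp; omega
  have hsplit : P.envList = (P.stmts.drop (i+1)).foldl slpStep (slpStep e (P.stmts.getD i [])) := by
    rw [envList_eq, List.getD_eq_getElem _ _ hi]
    conv_lhs => rw [← List.take_append_drop i P.stmts, List.foldl_append, List.drop_eq_getElem_cons hi]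
    rfl
  have hp : slpStep e (P.stmts.getD i []) <+: P.envList := hsplit ▸ run_prefix _ _
  have hpe : e <+: P.envList := (List.prefix_append _ _).trans hp
  unfold MultiSLP.value
  rw [← getD_of_prefix hp (by simp [slpStep, hel])]
  unfold slpStep
  rw [List.getD_append_right _ _ _ _ (by omega)]
  simp only [hel, Nat.sub_self, List.getD_cons_zero]
  congr 1
  apply List.map_congr_left
  intro t ht
  cases t with
  | const c => rfl
  | var j =>
    have := P.wfStmts i hi _ ht j rfl
    exact getD_of_prefix hpe (by omega) 0

lemma run_indep (B : List (List (Term C))) (envA : List (C → ZMod 2))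
    (hB : ∀ args ∈ B, ∀ t ∈ args, ∀ j, t = Term.var j → j < envA.length)
    (r : List (C → ZMod 2)) :
    B.foldl slpStep (envA ++ r) = envA ++ r ++ B.map (fun args => (args.map (Term.eval envA)).sum) := by
  induction B generalizing r with
  | nil => simp
  | cons a B ih =>
    have h1 : slpStep (envA ++ r) a = envA ++ (r ++ [(a.map (Term.eval envA)).sum]) := by
      unfold slpStep
      rw [List.append_assoc]
      congr 4
      apply List.map_congr_left
      intro t ht
      cases t with
      | const c => rfl
      | var j =>
        exact (getD_of_prefix (List.prefix_append _ _)
          (hB a (by simp) _ ht j rfl) 0).symm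
    rw [List.foldl_cons, h1, ih (fun args h => hB args (by simp [h]))]
    simp

end Run

section Lin
variable {N : Type} [Fintype N] [DecidableEq N]

instance constFintype : Fintype (Const N) where
  elems := {Const.rho} ∪ Finset.univ.image Const.node ∪ Finset.univ.image Const.lam
    ∪ Finset.univ.image Const.mu
  complete := by intro c; cases c <;> simp

lemma eConst_eq {C : Type} [DecidableEq C] (c : C) : eConst c = Pi.single c (1 : ZMod 2) := by
  ext d; simp [eConst, Pi.single_apply]

/-- Push-forward along a map of constants. -/
noncomputable def push (f : Const N → Const N) :
    (Const N → ZMod 2) →ₗ[ZMod 2] (Const N → ZMod 2) :=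
  Fintype.linearCombination (ZMod 2) (fun c => eConst (f c))

lemma push_e (f : Const N → Const N) (c : Const N) : push f (eConst c) = eConst (f c) := by
  simp [push, eConst_eq c]

/-- Parity. -/
noncomputable def par : (Const N → ZMod 2) →ₗ[ZMod 2] ZMod 2 :=
  Fintype.linearCombination (ZMod 2) (fun _ => (1 : ZMod 2))

lemma par_e (c : Const N) : par (eConst c) = 1 := by
  simp [par, eConst_eq c]

lemma push_comp (h f : Const N → Const N) (v : Const N → ZMod 2) :
    push (h ∘ f) v = push h (push f v) := by
  have : push (h ∘ f) = (push h).comp (push f) := by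
    apply LinearMap.pi_ext'
    intro c
    ext1
    have := eConst_eq c
    simp only [LinearMap.comp_apply, LinearMap.coe_single, ← eConst_eq, push_e, Function.comp]
  rw [this]; rfl

lemma zadd {V : Type*} [AddCommGroup V] [Module (ZMod 2) V] (v : V) : v + v = 0 := by
  rw [← two_smul (ZMod 2) v, show (2 : ZMod 2) = 0 from rfl, zero_smul]

/-- Good contraction. -/
structure Good (f : Const N → Const N) : Prop where
  rho : f .rho = .rho
  lam : ∀ a, f (.lam a) = .rho
  mu : ∀ a, f (.mu a) = .rho
  idem : ∀ c, f (f c) = f c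

/-- Moved nodes. -/
def moved (f : Const N → Const N) : Finset N := Finset.univ.filter fun a => f (.node a) ≠ .node a

/-- The push-forward is zero or a basis vector. -/
def Triv (f : Const N → Const N) (v : Const N → ZMod 2) : Prop :=
  push f v = 0 ∨ ∃ c, f c = c ∧ push f v = eConst c

lemma merge (f : Const N → Const N) (hf : Good f) (A : Finset (Const N)) (hA : A.Nonempty)
    (hAf : ∀ c ∈ A, f c = c) :
    ∃ h : Const N → Const N, ∃ t, Good (h ∘ f) ∧ (h ∘ f) t = t ∧ (∀ c ∈ A, h c = t) ∧
      (moved (h ∘ f)).card ≤ (moved f).card + (A.card - 1) ∧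
      (∀ v, Triv f v → Triv (h ∘ f) v) := by
  obtain ⟨t, htA, ht⟩ : ∃ t ∈ A, Const.rho ∈ A → t = Const.rho := by
    by_cases h : Const.rho ∈ A
    · exact ⟨_, h, fun _ => rfl⟩
    · obtain ⟨t, ht⟩ := hA
      exact ⟨t, ht, fun h' => absurd h' h⟩
  have hft := hAf t htA
  let h : Const N → Const N := fun c => if c ∈ A then t else c
  have hr : h .rho = .rho := by
    by_cases hh : Const.rho ∈ A
    · simp [h, hh, ht hh]
    · simp [h, hh]
  have htt : h t = t := by simp [h]
  have hfix : ∀ c, f c = c → f (h c) = h c ∧ h (h c) = h c := by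
    intro c hc
    by_cases hh : c ∈ A
    · simp [h, hh, hft]
    · simp [h, hh, hc]
  refine ⟨h, t, ⟨?_, ?_, ?_, ?_⟩, ?_, ?_, ?_, ?_⟩
  · simp [hf.rho, hr]
  · intro a; simp [hf.lam, hr]
  · intro a; simp [hf.mu, hr]
  · intro c
    have := hfix (f c) (hf.idem c)
    simp only [Function.comp]
    rw [this.1, this.2]
  · simp [hft, htt]
  · intro c hc; simp [h, hc]
  · have hsub : (moved (h ∘ f)).image Const.node ⊆ (moved f).image Const.node ∪ A.erase t := by
      intro c hc
      simp only [Finset.mem_image, moved, Finset.mem_filter, Finset.mem_univ, true_and,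
        Function.comp, Finset.mem_union, Finset.mem_erase] at hc ⊢
      obtain ⟨a, ha, rfl⟩ := hc
      by_cases hfa : f (.node a) = .node a
      · right
        rw [hfa] at ha
        by_cases hh : Const.node a ∈ A
        · simp only [h, hh, if_true] at ha
          exact ⟨fun e => ha e.symm, hh⟩
        · simp [h, hh] at ha
      · left; exact ⟨a, hfa, rfl⟩
    have hinj : Function.Injective (Const.node : N → Const N) := fun a b h => by simpa using h
    have := Finset.card_le_card hsub
    rw [Finset.card_image_of_injective _ hinj] at this
    refine this.trans ((Finset.card_union_le _ _).trans ?_)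
    rw [Finset.card_image_of_injective _ hinj, Finset.card_erase_of_mem htA]
  · intro v hv
    rcases hv with hv | ⟨c, hc, hv⟩
    · left; rw [push_comp, hv, map_zero]
    · right
      refine ⟨h c, ?_, ?_⟩
      · have := hfix c hc
        simp only [Function.comp]; rw [this.1, this.2]
      · rw [push_comp, hv, push_e]

/-- Goal vectors. -/
def goalE (x y : Const N) : Const N → ZMod 2 := eConst Const.rho + eConst x + eConst y

lemma goalE_par (x y : Const N) : par (goalE x y) = 1 := by
  simp only [goalE, map_add, par_e]; rfl

end Lin

section Cover
variable {N : Type} [Fintype N] [DecidableEq N]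

lemma collect (f : Const N → Const N) (l : List (Const N → ZMod 2))
    (hl : ∀ v ∈ l, Triv f v) :
    ∃ A : Finset (Const N), A.card ≤ l.length ∧ (∀ c ∈ A, f c = c) ∧
      ∀ v ∈ l, push f v = 0 ∨ ∃ c ∈ A, push f v = eConst c := by
  induction l with
  | nil => exact ⟨∅, by simp⟩
  | cons v l ih =>
    obtain ⟨A, h1, h2, h3⟩ := ih (fun v hv => hl v (by simp [hv]))
    rcases hl v (by simp) with h | ⟨c, hc, h⟩
    · refine ⟨A, by simp; omega, h2, ?_⟩
      intro w hw
      rcases List.mem_cons.1 hw with rfl | hw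
      · exact Or.inl h
      · exact h3 w hw
    · refine ⟨insert c A, (Finset.card_insert_le _ _).trans (by simp; omega), ?_, ?_⟩
      · intro d hd
        rcases Finset.mem_insert.1 hd with rfl | hd
        · exact hc
        · exact h2 d hd
      · intro w hw
        rcases List.mem_cons.1 hw with rfl | hw
        · exact Or.inr ⟨c, by simp, h⟩
        · rcases h3 w hw with h | ⟨d, hd, h⟩
          · exact Or.inl h
          · exact Or.inr ⟨d, by simp [hd], h⟩

lemma sum_two (g : (Const N → ZMod 2) →ₗ[ZMod 2] (Const N → ZMod 2)) (u : Const N → ZMod 2)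
    (l : List (Const N → ZMod 2)) (hl : ∀ v ∈ l, g v = 0 ∨ g v = u) :
    g l.sum = 0 ∨ g l.sum = u := by
  induction l with
  | nil => simp
  | cons v l ih =>
    rw [List.sum_cons, map_add]
    rcases hl v (by simp) with h | h <;> rcases ih (fun v hv => hl v (by simp [hv])) with h' | h' <;>
      simp [h, h', zadd]

lemma cover_aux (m : ℕ) (args : ℕ → List (Term (Const N))) (env : List (Const N → ZMod 2))
    (w : ℕ → ℕ)
    (hval : ∀ i < m, env.getD i 0 = ((args i).map (Term.eval env)).sum)
    (hwf : ∀ i < m, ∀ t ∈ args i, ∀ j, t = Term.var j → j < i)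
    (har : ∀ i < m, 2 ≤ (args i).length)
    (hcl : ∀ i < m, (args i).length - 1 ≤ w i ∨
      ((args i).length - 2 ≤ w i ∧ ∃ a b, env.getD i 0 = goalE (.node a) (.node b)) ∨
      (∃ a, env.getD i 0 = goalE (.node a) (.lam a) ∨ env.getD i 0 = goalE (.node a) (.mu a)))
    (k : ℕ) (hk : k ≤ m) :
    ∃ f : Const N → Const N, Good f ∧ (moved f).card ≤ ∑ i ∈ Finset.range k, w i ∧
      ∀ i < k, Triv f (env.getD i 0) := by
  induction k with
  | zero =>
    refine ⟨fun c => match c with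
      | .node a => .node a
      | _ => .rho, ⟨rfl, fun _ => rfl, fun _ => rfl, ?_⟩, ?_, ?_⟩
    · intro c; cases c <;> rfl
    · simp [moved]
    · intro i hi; omega
  | succ k ih =>
    obtain ⟨f, hf, hc, ht⟩ := ih (by omega)
    have hkm : k < m := hk
    rw [Finset.sum_range_succ]
    have hargs : ∀ v ∈ (args k).map (Term.eval env), Triv f v := by
      intro v hv
      obtain ⟨t, htm, rfl⟩ := List.mem_map.1 hv
      cases t with
      | const c => exact Or.inr ⟨f c, hf.idem c, push_e f c⟩
      | var j => exact ht j (hwf k hkm _ htm j rfl)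
    -- it suffices to extend
    have ext0 : Triv f (env.getD k 0) → ∀ i < k + 1, Triv f (env.getD i 0) := by
      intro h i hi
      rcases Nat.lt_succ_iff_lt_or_eq.1 hi with h' | rfl
      · exact ht i h'
      · exact h
    rcases hcl k hkm with hS | ⟨hE, a, b, hab⟩ | ⟨a, ha⟩
    · obtain ⟨A, hA1, hA2, hA3⟩ := collect f _ hargs
      rw [List.length_map] at hA1
      rcases A.eq_empty_or_nonempty with rfl | hne
      · refine ⟨f, hf, by omega, ext0 (Or.inl ?_)⟩
        rw [hval k hkm]
        rcases sum_two (push f) 0 _ (fun v hv => by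
          rcases hA3 v hv with h | ⟨c, hc, -⟩
          · exact Or.inl h
          · simp at hc) with h | h <;> exact h
      · obtain ⟨h, t, hg, htt, hAt, hcard, hpres⟩ := merge f hf A hne hA2
        refine ⟨h ∘ f, hg, by omega, ?_⟩
        intro i hi
        rcases Nat.lt_succ_iff_lt_or_eq.1 hi with h' | rfl
        · exact hpres _ (ht i h')
        · rw [hval i hkm]
          rcases sum_two (push (h ∘ f)) (eConst t) _ (fun v hv => by
            rcases hA3 v hv with h' | ⟨c, hc, h'⟩
            · left; rw [push_comp, h', map_zero]
            · right; rw [push_comp, h', push_e, hAt c hc]) with h' | h'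
          · exact Or.inl h'
          · exact Or.inr ⟨t, htt, h'⟩
    · by_cases hn : (args k).length = 2
      · refine ⟨f, hf, by omega, ext0 ?_⟩
        obtain ⟨x, y, hxy⟩ := List.length_eq_two.1 hn
        have hv := hval k hkm
        rw [hxy] at hv hargs
        simp only [List.map_cons, List.map_nil, List.sum_cons, List.sum_nil, add_zero] at hv
        have hp : par (push f (env.getD k 0)) = 1 := by
          rw [hab]; simp only [goalE, map_add, push_e, par_e]; rfl
        have hx := hargs (Term.eval env x) (by simp)
        have hy := hargs (Term.eval env y) (by simp)
        rw [hv, map_add] at hp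
        rw [hv]
        unfold Triv
        rw [map_add]
        rcases hx with hx | ⟨c, hc', hx⟩ <;> rcases hy with hy | ⟨d, hd', hy⟩
        · simp [hx, hy]
        · right; exact ⟨d, hd', by simp [hx, hy]⟩
        · right; exact ⟨c, hc', by simp [hx, hy]⟩
        · rw [hx, hy, map_add, par_e, par_e] at hp
          exact absurd hp (by decide)
      · have := har k hkm
        obtain ⟨h, t, hg, htt, hAt, hcard, hpres⟩ := merge f hf {.rho, f (.node a)} (by simp)
          (by intro c hc
              simp only [Finset.mem_insert, Finset.mem_singleton] at hc
              rcases hc with rfl | rfl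
              · exact hf.rho
              · exact hf.idem _)
        have h2 : ({.rho, f (.node a)} : Finset (Const N)).card ≤ 2 := Finset.card_le_two
        refine ⟨h ∘ f, hg, by omega, ?_⟩
        intro i hi
        rcases Nat.lt_succ_iff_lt_or_eq.1 hi with h' | rfl
        · exact hpres _ (ht i h')
        · rw [hab]
          refine Or.inr ⟨(h ∘ f) (.node b), hg.idem _, ?_⟩
          simp only [goalE, map_add, push_e]
          have e1 : (h ∘ f) Const.rho = t := by
            simp only [Function.comp, hf.rho]; exact hAt _ (by simp)
          have e2 : (h ∘ f) (Const.node a) = t := hAt _ (by simp)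
          rw [e1, e2, zadd, zero_add]
    · refine ⟨f, hf, by omega, ext0 (Or.inr ⟨f (.node a), hf.idem _, ?_⟩)⟩
      rcases ha with ha | ha <;> rw [ha] <;>
        simp only [goalE, map_add, push_e, hf.rho, hf.lam, hf.mu] <;>
        rw [add_right_comm, zadd, zero_add]

lemma moved_cover (f : Const N → Const N) (hf : Good f) (a b : N) (hab : a ≠ b)
    (h : Triv f (goalE (.node a) (.node b))) : a ∈ moved f ∨ b ∈ moved f := by
  by_contra hcon
  simp only [moved, Finset.mem_filter, Finset.mem_univ, true_and, not_or, not_not] at hcon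
  obtain ⟨ha, hb⟩ := hcon
  unfold Triv at h
  simp only [goalE, map_add, push_e, hf.rho, ha, hb] at h
  rcases h with h | ⟨c, -, h⟩
  · have := congrFun h .rho
    simp [eConst] at this
  · have h1 := congrFun h .rho
    have h2 := congrFun h (.node a)
    simp [eConst, hab] at h1 h2
    by_cases h3 : Const.rho = c
    · subst h3; simp at h2
    · simp [h3] at h1

end Cover

section LocalCount
variable {N : Type} [Fintype N] [DecidableEq N]

lemma zmod2_ne (x : ZMod 2) (h : x ≠ 0) : x = 1 := by
  revert h; revert x; decide

lemma indep_core {V : Type*} [AddCommGroup V] [Module (ZMod 2) V] [Module.Finite (ZMod 2) V]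
    (φ : V →ₗ[ZMod 2] (Const N → ZMod 2)) (B : Finset N) (jl : N → ℕ) (loc : N → Const N)
    (hloc : Function.Injective loc) (hlr : ∀ a, loc a ≠ .rho) (hln : ∀ a b, loc a ≠ .node b)
    (u : N → V) (T : N → Const N → ZMod 2)
    (huT : ∀ a ∈ B, φ (u a) + T a = goalE (.node a) (loc a))
    (h1 : ∀ a ∈ B, ∀ b c, T a (loc b) ≠ 0 → T a (loc c) ≠ 0 → b = c)
    (h2 : ∀ a ∈ B, ∀ b c, T a (loc b) ≠ 0 → T a (.node c) ≠ 0 → jl c < jl a) :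
    B.card ≤ Module.finrank (ZMod 2) V := by
  have key : ∀ D ⊆ B, ∑ a ∈ D, u a = 0 → D = ∅ := by
    intro D hDB hsum
    by_contra hD
    have hDne := Finset.nonempty_iff_ne_empty.2 hD
    have hs : ∑ a ∈ D, T a = ∑ a ∈ D, goalE (.node a) (loc a) := by
      rw [← Finset.sum_congr rfl (fun a ha => huT a (hDB ha)), Finset.sum_add_distrib,
        ← map_sum, hsum, map_zero, zero_add]
    have hl : ∀ b ∈ D, ∃ a ∈ D, T a (loc b) ≠ 0 := by
      intro b hb
      have := congrFun hs (loc b)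
      rw [Finset.sum_apply, Finset.sum_apply] at this
      apply Finset.exists_ne_zero_of_sum_ne_zero
      rw [this]
      simp [goalE, eConst, hlr, hln, hloc.eq_iff, hb]
    have hn : ∀ b ∈ D, ∃ a ∈ D, T a (.node b) ≠ 0 := by
      intro b hb
      have := congrFun hs (.node b)
      rw [Finset.sum_apply, Finset.sum_apply] at this
      apply Finset.exists_ne_zero_of_sum_ne_zero
      rw [this]
      have hln' : ∀ a, Const.node b ≠ loc a := fun a h => hln a b h.symm
      simp [goalE, eConst, hln', hb]
    choose! σ hσ using hl
    have hinj : Set.InjOn σ D := by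
      intro b hb c hc hbc
      exact h1 (σ b) (hDB (hσ b hb).1) b c (hσ b hb).2 (by rw [hbc]; exact (hσ c hc).2)
    have hsurj : Set.SurjOn σ D D :=
      Finset.surjOn_of_injOn_of_card_le σ (fun b hb => (hσ b hb).1) hinj le_rfl
    obtain ⟨b, hb, hmax⟩ := Finset.exists_max_image D jl hDne
    obtain ⟨a, ha, hTa⟩ := hn b hb
    obtain ⟨c, hc, rfl⟩ := hsurj ha
    have := h2 _ (hDB ha) c b (hσ c hc).2 hTa
    have := hmax _ ha
    omega
  have hli : LinearIndependent (ZMod 2) (fun a : B => u a) := by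
    rw [Fintype.linearIndependent_iff]
    intro g hg
    have := key ((Finset.univ.filter fun a : B => g a ≠ 0).map (Function.Embedding.subtype _))
      (by intro x hx
          obtain ⟨y, -, rfl⟩ := Finset.mem_map.1 hx
          exact y.2)
      (by rw [Finset.sum_map, Finset.sum_filter]
          refine Eq.trans ?_ hg
          apply Finset.sum_congr rfl
          intro a _
          by_cases h : g a = 0
          · rw [if_neg (by simpa using h), h, zero_smul]
          · rw [if_pos h, zmod2_ne _ h, one_smul]; rfl)
    intro a
    by_contra ha
    have hm : (a : N) ∈ ((Finset.univ.filter fun a : B => g a ≠ 0).map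
        (Function.Embedding.subtype _)) := by
      rw [Finset.mem_map]
      exact ⟨a, by simp [ha], rfl⟩
    rw [this] at hm
    simp at hm
  have := hli.fintype_card_le_finrank
  simpa using this

/-- The classes a residual vector may belong to. -/
def Resid (jl : N → ℕ) (loc loc' : N → Const N) (k : ℕ) (v : Const N → ZMod 2) : Prop :=
  (∃ c, v = eConst c) ∨ (∃ a b, v = goalE (.node a) (.node b)) ∨
  (∃ b, jl b < k ∧ v = goalE (.node b) (loc b)) ∨ (∃ b, v = goalE (.node b) (loc' b))

lemma Resid.par_eq {jl : N → ℕ} {loc loc' : N → Const N} {k : ℕ} {v : Const N → ZMod 2}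
    (h : Resid jl loc loc' k v) : par v = 1 := by
  rcases h with ⟨c, rfl⟩ | ⟨a, b, rfl⟩ | ⟨b, -, rfl⟩ | ⟨b, rfl⟩
  · exact par_e c
  all_goals exact goalE_par _ _

lemma local_count (m : ℕ) (args : ℕ → List (Term (Const N))) (env : List (Const N → ZMod 2))
    (hval : ∀ i < m, env.getD i 0 = ((args i).map (Term.eval env)).sum)
    (hwf : ∀ i < m, ∀ t ∈ args i, ∀ j, t = Term.var j → j < i)
    (S : Finset ℕ) (jl : N → ℕ) (hjl : ∀ a, jl a < m) (loc loc' : N → Const N)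
    (hloc : Function.Injective loc) (hlr : ∀ a, loc a ≠ .rho) (hln : ∀ a b, loc a ≠ .node b)
    (hll : ∀ a b, loc a ≠ loc' b)
    (hjv : ∀ a, env.getD (jl a) 0 = goalE (.node a) (loc a))
    (hcl : ∀ i < m, i ∈ S ∨ (∃ a b, env.getD i 0 = goalE (.node a) (.node b)) ∨
      (∃ a, i = jl a) ∨ (∃ a, env.getD i 0 = goalE (.node a) (loc' a))) :
    (Finset.univ.filter fun a => (args (jl a)).length = 2).card ≤ S.card := by
  let φ : (S → ZMod 2) →ₗ[ZMod 2] (Const N → ZMod 2) :=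
    Fintype.linearCombination (ZMod 2) (fun s : S => env.getD s 0)
  have hterm : ∀ k ≤ m, ∀ t : Term (Const N), (∀ j, t = Term.var j → j < k) →
      (∃ u, φ u = Term.eval env t) ∨ Resid jl loc loc' k (Term.eval env t) := by
    intro k hkm t ht
    cases t with
    | const c => right; left; exact ⟨c, rfl⟩
    | var j =>
      have hj := ht j rfl
      rcases hcl j (by omega) with h | h | ⟨a, h⟩ | h
      · left
        exact ⟨Pi.single ⟨j, h⟩ 1, by simp [φ, Term.eval]⟩
      · right; right; left; exact h
      · right; right; right; left
        subst h
        exact ⟨a, hj, hjv a⟩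
      · right; right; right; right; exact h
  have hB : ∀ a, (args (jl a)).length = 2 → ∃ u T, φ u + T = goalE (.node a) (loc a) ∧
      (T = 0 ∨ Resid jl loc loc' (jl a) T) := by
    intro a ha
    obtain ⟨x, y, hxy⟩ := List.length_eq_two.1 ha
    have hv := hval _ (hjl a)
    have hw := hwf _ (hjl a)
    rw [hxy] at hv hw
    simp only [List.map_cons, List.map_nil, List.sum_cons, List.sum_nil, add_zero] at hv
    rw [hjv] at hv
    rw [hv]
    rcases hterm _ (hjl a).le x (hw x (by simp)) with ⟨ux, hx⟩ | hx <;>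
      rcases hterm _ (hjl a).le y (hw y (by simp)) with ⟨uy, hy⟩ | hy
    · exact ⟨ux + uy, 0, by rw [map_add, hx, hy, add_zero], Or.inl rfl⟩
    · exact ⟨ux, _, by rw [hx], Or.inr hy⟩
    · exact ⟨uy, _, by rw [hy, add_comm], Or.inr hx⟩
    · have := congrArg par hv
      rw [goalE_par, map_add, hx.par_eq, hy.par_eq] at this
      exact absurd this (by decide)
  choose! u T huT hT using hB
  have hln' : ∀ a b, Const.node b ≠ loc a := fun a b h => hln a b h.symm
  have := indep_core φ (Finset.univ.filter fun a => (args (jl a)).length = 2) jl loc hloc hlr hln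
    u T (fun a ha => huT a (by simpa using ha))
    (by
      intro a ha b c hb hc
      rcases hT a (by simpa using ha) with h | ⟨d, h⟩ | ⟨d, e, h⟩ | ⟨d, hd, h⟩ | ⟨d, h⟩ <;>
        rw [h] at hb hc
      · simp at hb
      · simp only [eConst, ne_eq, ite_eq_right_iff, one_ne_zero, imp_false, not_not] at hb hc
        exact hloc (hb.trans hc.symm)
      · simp [goalE, eConst, hlr, hln] at hb
      · simp only [goalE, eConst, Pi.add_apply, hlr, hln, hloc.eq_iff, if_false, zero_add, ne_eq,
          ite_eq_right_iff, one_ne_zero, imp_false, not_not] at hb hc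
        exact hb.trans hc.symm
      · simp [goalE, eConst, hlr, hln, hll] at hb)
    (by
      intro a ha b c hb hc
      rcases hT a (by simpa using ha) with h | ⟨d, h⟩ | ⟨d, e, h⟩ | ⟨d, hd, h⟩ | ⟨d, h⟩ <;>
        rw [h] at hb hc
      · simp at hb
      · simp only [eConst, ne_eq, ite_eq_right_iff, one_ne_zero, imp_false, not_not] at hb hc
        exact absurd (hb.trans hc.symm) (hln _ _)
      · simp [goalE, eConst, hlr, hln] at hb
      · simp [goalE, eConst, hln'] at hc
        rw [hc]; exact hd
      · simp [goalE, eConst, hlr, hln, hll] at hb)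
  simpa using this

end LocalCount

section Lower
variable {N : Type} [Fintype N] [DecidableEq N]

lemma sum_getD {α : Type*} (d : α) (f : α → ℕ) (l : List α) :
    (l.map f).sum = ∑ i ∈ Finset.range l.length, f (l.getD i d) := by
  induction l with
  | nil => simp
  | cons a l ih =>
    rw [List.length_cons, Finset.sum_range_succ']
    simp [ih, add_comm]

lemma goalE_ne_const (x y c : Const N) (hx : x ≠ .rho) (hy : y ≠ .rho) (hxy : x ≠ y) :
    eConst c ≠ goalE x y := by
  intro h
  have h1 := congrFun h .rho
  have h2 := congrFun h x
  simp [goalE, eConst, hx, hx.symm, hy.symm, hxy] at h1 h2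
  exact hx (h2.trans h1.symm)

lemma goalE_sym2 {a b c d : N} (hab : a ≠ b)
    (h : goalE (Const.node a) (.node b) = goalE (.node c) (.node d)) : s(a, b) = s(c, d) := by
  have h1 := congrFun h (.node a)
  have h2 := congrFun h (.node b)
  simp only [goalE, eConst, Pi.add_apply, reduceCtorEq, if_false, Const.node.injEq] at h1 h2
  rw [Sym2.eq_iff]
  by_cases e1 : a = c <;> by_cases e2 : a = d <;> by_cases e3 : b = c <;> by_cases e4 : b = d <;>
    simp_all [eq_comm]

lemma find_idx {C : Type} [DecidableEq C] (Q : MultiSLP C) (v : C → ZMod 2) (hv : v ∈ Q.result)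
    (hc : ∀ c, eConst c ≠ v) : ∃ j < Q.stmts.length, Q.envList.getD j 0 = v := by
  obtain ⟨t, ht, rfl⟩ := List.mem_map.1 hv
  cases t with
  | const c => exact absurd rfl (hc c)
  | var j => exact ⟨j, Q.wfRet _ ht j rfl, rfl⟩

lemma tau_le (G : SimpleGraph N) (X : Finset N) (hX : ∀ a b : N, G.Adj a b → a ∈ X ∨ b ∈ X) :
    tau G ≤ X.card := Nat.sInf_le ⟨X, hX, rfl⟩

lemma loc_cost (n : ℕ → ℕ) (jl : N → ℕ) (hinj : Function.Injective jl) (s : ℕ)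
    (hn : ∀ a, 2 ≤ n (jl a))
    (h : (Finset.univ.filter fun a => n (jl a) = 2).card ≤ s) :
    4 * Fintype.card N ≤ ∑ i ∈ Finset.univ.image jl, (n i + 1) + s := by
  rw [Finset.sum_image (fun a _ b _ h => hinj h)]
  have h1 : ∑ a : N, 4 ≤ ∑ a : N, ((n (jl a) + 1) + if n (jl a) = 2 then 1 else 0) := by
    apply Finset.sum_le_sum
    intro a _
    have := hn a
    split_ifs <;> omega
  rw [Finset.sum_add_distrib, ← Finset.card_filter] at h1
  simp only [Finset.sum_const, Finset.card_univ, smul_eq_mul] at h1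
  omega

lemma lower_bound (G : SimpleGraph N) (L : List (N × N)) (nodes : List N)
    (hnodesA : ∀ a : N, a ∈ nodes)
    (hLN : (L.map fun p => s(p.1, p.2)).Nodup)
    (hLadj : ∀ p ∈ L, G.Adj p.1 p.2)
    (hLall : ∀ a b : N, G.Adj a b → s(a, b) ∈ L.map fun p => s(p.1, p.2))
    (Q : MultiSLP (Const N)) (hQ : Q.result = targetValues L nodes) :
    3 * L.length + 8 * Fintype.card N + tau G ≤ Q.costM := by
  set m := Q.stmts.length with hm
  set env := Q.envList with henv
  let args : ℕ → List (Term (Const N)) := fun i => Q.stmts.getD i []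
  have hval : ∀ i < m, env.getD i 0 = ((args i).map (Term.eval env)).sum :=
    fun i hi => value_eq Q i hi
  have hwf : ∀ i < m, ∀ t ∈ args i, ∀ j, t = Term.var j → j < i := Q.wfStmts
  have har : ∀ i < m, 2 ≤ (args i).length := by
    intro i hi
    apply Q.arity
    simp only [args]
    rw [List.getD_eq_getElem _ _ hi]
    exact List.getElem_mem _
  have hE : ∀ p ∈ L, ∃ j < m, env.getD j 0 = goalE (.node p.1) (.node p.2) := by
    intro p hp
    apply find_idx
    · rw [hQ]; unfold targetValues
      exact List.mem_append_left _ (List.mem_map.2 ⟨p, hp, rfl⟩)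
    · intro c
      exact goalE_ne_const _ _ _ (by simp) (by simp) (by simpa using (hLadj p hp).ne)
  have hla : ∀ a : N, ∃ j < m, env.getD j 0 = goalE (.node a) (.lam a) := by
    intro a
    apply find_idx
    · rw [hQ]; unfold targetValues
      exact List.mem_append_right _ (List.mem_flatMap.2 ⟨a, hnodesA a, by simp [goalE]⟩)
    · intro c
      exact goalE_ne_const _ _ _ (by simp) (by simp) (by simp)
  have hmu : ∀ a : N, ∃ j < m, env.getD j 0 = goalE (.node a) (.mu a) := by
    intro a
    apply find_idx
    · rw [hQ]; unfold targetValues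
      exact List.mem_append_right _ (List.mem_flatMap.2 ⟨a, hnodesA a, by simp [goalE]⟩)
    · intro c
      exact goalE_ne_const _ _ _ (by simp) (by simp) (by simp)
  choose! jE hjE hvE using hE
  choose jl hjl hvl using hla
  choose jm hjm hvm using hmu
  have injl : Function.Injective jl := by
    intro a b h
    have := hvl a
    rw [h, hvl b] at this
    have := congrFun this (.lam a)
    by_contra hab
    simp [goalE, eConst, hab] at this
  have injm : Function.Injective jm := by
    intro a b h
    have := hvm a
    rw [h, hvm b] at this
    have := congrFun this (.mu a)
    by_contra hab
    simp [goalE, eConst, hab] at this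
  let EI := L.toFinset.image jE
  let LI := Finset.univ.image jl
  let MI := Finset.univ.image jm
  have hEI : EI.card = L.length := by
    rw [Finset.card_image_of_injOn, List.toFinset_card_of_nodup hLN.of_map]
    intro p hp q hq hpq
    have hp' : p ∈ L := by simpa using hp
    have hq' : q ∈ L := by simpa using hq
    apply List.inj_on_of_nodup_map hLN hp' hq'
    apply goalE_sym2 (hLadj p hp').ne
    rw [← hvE p hp', ← hvE q hq', hpq]
  have dLM : Disjoint LI MI := by
    rw [Finset.disjoint_left]
    intro i hi hi'
    obtain ⟨a, -, rfl⟩ := Finset.mem_image.1 hi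
    obtain ⟨b, -, h⟩ := Finset.mem_image.1 hi'
    have := hvl a
    rw [← h, hvm b] at this
    have := congrFun this (.lam a)
    simp [goalE, eConst] at this
  have dEL : Disjoint EI (LI ∪ MI) := by
    rw [Finset.disjoint_left]
    intro i hi hi'
    obtain ⟨p, hp, rfl⟩ := Finset.mem_image.1 hi
    have hp' : p ∈ L := by simpa using hp
    have := hvE p hp'
    rcases Finset.mem_union.1 hi' with hi' | hi'
    · obtain ⟨b, -, h⟩ := Finset.mem_image.1 hi'
      rw [← h, hvl b] at this
      have := congrFun this (.lam b)
      simp [goalE, eConst] at this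
    · obtain ⟨b, -, h⟩ := Finset.mem_image.1 hi'
      rw [← h, hvm b] at this
      have := congrFun this (.mu b)
      simp [goalE, eConst] at this
  have hsub : EI ∪ (LI ∪ MI) ⊆ Finset.range m := by
    intro i hi
    simp only [Finset.mem_union, EI, LI, MI, Finset.mem_image] at hi
    rw [Finset.mem_range]
    rcases hi with ⟨p, hp, rfl⟩ | ⟨a, -, rfl⟩ | ⟨a, -, rfl⟩
    · exact hjE p (by simpa using hp)
    · exact hjl a
    · exact hjm a
  let S := Finset.range m \ (EI ∪ (LI ∪ MI))
  have hsplit : ∀ F : ℕ → ℕ, ∑ i ∈ Finset.range m, F i =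
      ∑ i ∈ S, F i + (∑ i ∈ EI, F i + (∑ i ∈ LI, F i + ∑ i ∈ MI, F i)) := by
    intro F
    rw [← Finset.sum_union dLM, ← Finset.sum_union dEL, Finset.sum_sdiff hsub]
  have hcls : ∀ i < m, i ∈ S ∨ i ∈ EI ∨ i ∈ LI ∨ i ∈ MI := by
    intro i hi
    by_cases h : i ∈ EI ∪ (LI ∪ MI)
    · right; simpa using h
    · left; simp only [S, Finset.mem_sdiff, Finset.mem_range]; exact ⟨hi, h⟩
  have vE : ∀ i ∈ EI, ∃ a b, env.getD i 0 = goalE (.node a) (.node b) := by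
    intro i hi
    obtain ⟨p, hp, rfl⟩ := Finset.mem_image.1 hi
    exact ⟨_, _, hvE p (by simpa using hp)⟩
  have vL : ∀ i ∈ LI, ∃ a, i = jl a := by
    intro i hi
    obtain ⟨p, hp, rfl⟩ := Finset.mem_image.1 hi
    exact ⟨_, rfl⟩
  have vM : ∀ i ∈ MI, ∃ a, i = jm a := by
    intro i hi
    obtain ⟨p, hp, rfl⟩ := Finset.mem_image.1 hi
    exact ⟨_, rfl⟩
  -- local counts
  have cL := local_count m args env hval hwf S jl hjl .lam .mu
    (fun a b h => by simpa using h) (by simp) (by simp) (by simp) hvl (by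
      intro i hi
      rcases hcls i hi with h | h | h | h
      · exact Or.inl h
      · exact Or.inr (Or.inl (vE i h))
      · exact Or.inr (Or.inr (Or.inl (vL i h)))
      · obtain ⟨a, rfl⟩ := vM i h
        exact Or.inr (Or.inr (Or.inr ⟨a, hvm a⟩)))
  have cM := local_count m args env hval hwf S jm hjm .mu .lam
    (fun a b h => by simpa using h) (by simp) (by simp) (by simp) hvm (by
      intro i hi
      rcases hcls i hi with h | h | h | h
      · exact Or.inl h
      · exact Or.inr (Or.inl (vE i h))
      · obtain ⟨a, rfl⟩ := vL i h
        exact Or.inr (Or.inr (Or.inr ⟨a, hvl a⟩))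
      · exact Or.inr (Or.inr (Or.inl (vM i h))))
  have kL := loc_cost (fun i => (args i).length) jl injl S.card (fun a => har _ (hjl a)) cL
  have kM := loc_cost (fun i => (args i).length) jm injm S.card (fun a => har _ (hjm a)) cM
  -- cover
  let w : ℕ → ℕ := fun i => if i ∈ S then (args i).length - 1 else
    if i ∈ EI then (args i).length - 2 else 0
  obtain ⟨f, hf, hfc, hft⟩ := cover_aux m args env w hval hwf har (by
      intro i hi
      rcases hcls i hi with h | h | h | h
      · left; simp [w, h]
      · right; left
        refine ⟨?_, vE i h⟩
        simp only [w, h, if_true]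
        split_ifs <;> omega
      · obtain ⟨a, rfl⟩ := vL i h
        exact Or.inr (Or.inr ⟨a, Or.inl (hvl a)⟩)
      · obtain ⟨a, rfl⟩ := vM i h
        exact Or.inr (Or.inr ⟨a, Or.inr (hvm a)⟩)) m le_rfl
  have htau : tau G ≤ (moved f).card := by
    apply tau_le
    intro a b hab
    obtain ⟨p, hp, hpe⟩ := List.mem_map.1 (hLall a b hab)
    have h1 := hft _ (hjE p hp)
    rw [hvE p hp] at h1
    have h2 := moved_cover f hf _ _ (hLadj p hp).ne h1
    rcases Sym2.eq_iff.1 hpe with ⟨e1, e2⟩ | ⟨e1, e2⟩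
    · rw [e1, e2] at h2; exact h2
    · rw [e1, e2] at h2; exact h2.symm
  have hcost : Q.costM = ∑ i ∈ Finset.range m, ((args i).length + 1) := by
    unfold MultiSLP.costM
    rw [sum_getD []]
  have hSm : ∀ i ∈ S, i < m := by
    intro i hi
    exact Finset.mem_range.1 (Finset.mem_sdiff.1 hi).1
  have notS : ∀ i ∈ EI ∪ (LI ∪ MI), i ∉ S := by
    intro i hi hS
    exact (Finset.mem_sdiff.1 hS).2 hi
  have wS : ∑ i ∈ S, ((args i).length + 1) = ∑ i ∈ S, w i + 2 * S.card := by
    rw [mul_comm, ← smul_eq_mul, ← Finset.sum_const, ← Finset.sum_add_distrib]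
    apply Finset.sum_congr rfl
    intro i hi
    have := har i (hSm i hi)
    simp only [w, hi, if_true]; omega
  have wE : ∑ i ∈ EI, ((args i).length + 1) = ∑ i ∈ EI, w i + 3 * EI.card := by
    rw [mul_comm, ← smul_eq_mul, ← Finset.sum_const, ← Finset.sum_add_distrib]
    apply Finset.sum_congr rfl
    intro i hi
    have := har i (Finset.mem_range.1 (hsub (Finset.mem_union_left _ hi)))
    simp only [w, hi, notS i (Finset.mem_union_left _ hi), if_true, if_false]; omega
  have w0 : ∀ i ∈ LI ∪ MI, w i = 0 := by
    intro i hi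
    have h1 := notS i (Finset.mem_union_right _ hi)
    have h2 : i ∉ EI := fun h => Finset.disjoint_left.1 dEL h hi
    simp [w, h1, h2]
  have wL : ∑ i ∈ LI, w i = 0 :=
    Finset.sum_eq_zero fun i hi => w0 i (Finset.mem_union_left _ hi)
  have wM : ∑ i ∈ MI, w i = 0 :=
    Finset.sum_eq_zero fun i hi => w0 i (Finset.mem_union_right _ hi)
  rw [hsplit] at hcost hfc
  rw [wL, wM] at hfc
  rw [wS, wE, hEI] at hcost
  have kL' : 4 * Fintype.card N ≤ ∑ i ∈ LI, ((args i).length + 1) + S.card := kL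
  have kM' : 4 * Fintype.card N ≤ ∑ i ∈ MI, ((args i).length + 1) + S.card := kM
  omega

end Lower

section Upper
variable {N : Type} [Fintype N] [DecidableEq N]

/-- Two-phase program. -/
lemma two_phase {C : Type} [DecidableEq C] (A B : List (List (Term C)))
    (hA2 : ∀ args ∈ A, 2 ≤ args.length) (hB2 : ∀ args ∈ B, 2 ≤ args.length)
    (hA : ∀ args ∈ A, ∀ t ∈ args, ∀ j, t ≠ Term.var j)
    (hB : ∀ args ∈ B, ∀ t ∈ args, ∀ j, t = Term.var j → j < A.length) :
    ∃ Q : MultiSLP C, Q.result = B.map (fun args => (args.map (Term.eval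
        (A.map (fun args => (args.map (Term.eval [])).sum)))).sum) ∧
      Q.costM = (A.map fun args => args.length + 1).sum +
        (B.map fun args => args.length + 1).sum := by
  refine ⟨⟨A ++ B, (List.range B.length).map fun i => Term.var (A.length + i), ?_, ?_, ?_⟩, ?_, ?_⟩
  · intro args h
    rcases List.mem_append.1 h with h | h
    · exact hA2 _ h
    · exact hB2 _ h
  · intro i hi t ht j htj
    by_cases hiA : i < A.length
    · rw [List.getD_append _ _ _ _ hiA, List.getD_eq_getElem _ _ hiA] at ht
      exact absurd htj (hA _ (List.getElem_mem _) t ht j)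
    · rw [List.length_append] at hi
      rw [List.getD_append_right _ _ _ _ (by omega), List.getD_eq_getElem _ _ (by omega)] at ht
      have := hB _ (List.getElem_mem _) t ht j htj
      omega
  · intro t ht j htj
    obtain ⟨i, hi, rfl⟩ := List.mem_map.1 ht
    simp only [List.mem_range, Term.var.injEq] at hi htj
    rw [List.length_append]; omega
  · unfold MultiSLP.result
    have henv : ∀ (r h1 h2 h3), MultiSLP.envList (⟨A ++ B, r, h1, h2, h3⟩ : MultiSLP C) =
        A.map (fun args => (args.map (Term.eval [])).sum) ++ B.map (fun args => (args.map (Term.eval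
        (A.map (fun args => (args.map (Term.eval [])).sum)))).sum) := by
      intro r h1 h2 h3
      rw [envList_eq]
      simp only [List.foldl_append]
      have e1 := run_indep A [] (fun args h t ht j hj => absurd hj (hA args h t ht j)) []
      simp only [List.nil_append] at e1
      rw [e1]
      have e2 := run_indep B (A.map (fun args => (args.map (Term.eval [])).sum))
        (by simpa using hB) []
      simpa using e2
    simp only [henv]
    apply List.ext_getElem
    · simp
    · intro i h1 h2
      have hi : i < B.length := by simpa using h1
      simp only [List.getElem_map, List.getElem_range, Term.eval]
      rw [List.getD_append_right _ _ _ _ (by simp)]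
      simp [hi]
  · simp [MultiSLP.costM]

lemma upper_bound (G : SimpleGraph N) (L : List (N × N)) (nodes : List N)
    (hnodesN : nodes.Nodup) (hnodesA : ∀ a : N, a ∈ nodes)
    (hLadj : ∀ p ∈ L, G.Adj p.1 p.2) :
    ∃ Q : MultiSLP (Const N), Q.result = targetValues L nodes ∧
      Q.costM = 3 * L.length + 8 * Fintype.card N + tau G := by
  obtain ⟨X, hX, hXc⟩ : ∃ X : Finset N, (∀ a b : N, G.Adj a b → a ∈ X ∨ b ∈ X) ∧
      X.card = tau G :=
    Nat.sInf_mem (s := {k | ∃ X : Finset N, (∀ a b : N, G.Adj a b → a ∈ X ∨ b ∈ X) ∧ X.card = k})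
      ⟨_, Finset.univ, by simp, rfl⟩
  let xs := X.toList
  let A : List (List (Term (Const N))) := xs.map fun a => [.const .rho, .const (.node a)]
  let half : N → Term (Const N) := fun a => .var (xs.idxOf a)
  let locSt : N → Const N → List (Term (Const N)) := fun a c =>
    if a ∈ X then [half a, .const c] else [.const .rho, .const (.node a), .const c]
  let edgeSt : N × N → List (Term (Const N)) := fun p =>
    if p.1 ∈ X then [half p.1, .const (.node p.2)] else [half p.2, .const (.node p.1)]
  let B := L.map edgeSt ++ nodes.flatMap fun a => [locSt a (.lam a), locSt a (.mu a)]
  have hAl : A.length = xs.length := by simp [A]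
  have hidx : ∀ a ∈ X, xs.idxOf a < A.length := by
    intro a ha
    rw [hAl]; exact List.idxOf_lt_length_of_mem (by simpa [xs] using ha)
  have hlv : ∀ a c, ∀ t ∈ locSt a c, ∀ j, t = Term.var j → j < A.length := by
    intro a c t ht j hj
    subst hj
    by_cases ha : a ∈ X
    · simp [locSt, ha, half] at ht
      rw [ht]; exact hidx a ha
    · simp [locSt, ha] at ht
  obtain ⟨Q, hQ, hc⟩ := two_phase A B
    (by simp [A])
    (by
      intro args h
      simp only [B, List.mem_append, List.mem_map, List.mem_flatMap, List.mem_cons,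
        List.not_mem_nil, or_false] at h
      rcases h with ⟨p, -, rfl⟩ | ⟨a, -, rfl | rfl⟩
      · simp only [edgeSt]; split_ifs <;> simp
      · simp only [locSt]; split_ifs <;> simp
      · simp only [locSt]; split_ifs <;> simp)
    (by
      intro args h t ht j
      obtain ⟨a, -, rfl⟩ := List.mem_map.1 h
      simp at ht
      rcases ht with rfl | rfl <;> simp)
    (by
      intro args h
      simp only [B, List.mem_append, List.mem_map, List.mem_flatMap, List.mem_cons,
        List.not_mem_nil, or_false] at h
      rcases h with ⟨p, hp, rfl⟩ | ⟨a, -, rfl | rfl⟩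
      · intro t ht j hj
        subst hj
        by_cases h1 : p.1 ∈ X
        · simp [edgeSt, h1, half] at ht
          rw [ht]; exact hidx _ h1
        · simp [edgeSt, h1, half] at ht
          rw [ht]; exact hidx _ ((hX _ _ (hLadj p hp)).resolve_left h1)
      · exact hlv a _
      · exact hlv a _)
  have hhalf : ∀ a ∈ X, Term.eval (A.map (fun args => (args.map (Term.eval [])).sum)) (half a) =
      eConst Const.rho + eConst (Const.node a) := by
    intro a ha
    have h1 := hidx a ha
    simp only [half, Term.eval]
    rw [List.getD_eq_getElem _ _ (by simpa using h1)]
    simp [A, Term.eval]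
  have hloc : ∀ a c, ((locSt a c).map
      (Term.eval (A.map (fun args => (args.map (Term.eval [])).sum)))).sum =
      eConst Const.rho + eConst (Const.node a) + eConst c := by
    intro a c
    by_cases ha : a ∈ X
    · simp only [locSt, ha, if_true, List.map_cons, List.map_nil, List.sum_cons, List.sum_nil,
        hhalf a ha, add_zero]; rfl
    · simp only [locSt, ha, if_false, List.map_cons, List.map_nil, List.sum_cons, List.sum_nil,
        add_zero, Term.eval, add_assoc]
  refine ⟨Q, ?_, ?_⟩
  · rw [hQ]
    simp only [B, targetValues, List.map_append, List.map_map, List.map_flatMap]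
    congr 1
    · apply List.map_congr_left
      intro p hp
      simp only [Function.comp]
      by_cases h1 : p.1 ∈ X
      · simp only [edgeSt, h1, if_true, List.map_cons, List.map_nil, List.sum_cons, List.sum_nil,
          hhalf _ h1, add_zero]; rfl
      · simp only [edgeSt, h1, if_false, List.map_cons, List.map_nil, List.sum_cons, List.sum_nil,
          hhalf _ ((hX _ _ (hLadj p hp)).resolve_left h1), add_zero]
        exact add_right_comm _ _ _
    · simp only [List.map_cons, List.map_nil, hloc]
  · rw [hc]
    have c1 : (A.map fun args => args.length + 1).sum = 3 * X.card := by
      simp [A, xs, Function.comp_def, mul_comm]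
    have c2 : ((L.map edgeSt).map fun args => args.length + 1).sum = 3 * L.length := by
      rw [List.map_map]
      have : ((fun args : List (Term (Const N)) => args.length + 1) ∘ edgeSt) = fun _ => 3 := by
        funext p; simp only [edgeSt, Function.comp]; split_ifs <;> rfl
      rw [this]; simp [mul_comm]
    have c3 : ((nodes.flatMap fun a => [locSt a (.lam a), locSt a (.mu a)]).map
        fun args => args.length + 1).sum + 2 * X.card = 8 * Fintype.card N := by
      have e1 : ∀ l : List N, ((l.flatMap fun a => [locSt a (.lam a), locSt a (.mu a)]).map
        fun args => args.length + 1).sum =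
          (l.map fun a => if a ∈ X then 6 else 8).sum := by
        intro l
        induction l with
        | nil => simp
        | cons a l ih =>
          rw [List.flatMap_cons, List.map_append, List.sum_append, ih, List.map_cons, List.sum_cons]
          congr 1
          simp only [locSt]
          split_ifs <;> simp
      have huniv : nodes.toFinset = Finset.univ := by ext a; simp [hnodesA]
      rw [e1, ← List.sum_toFinset _ hnodesN, huniv]
      have : ∑ a : N, ((if a ∈ X then 6 else 8) + (if a ∈ X then 2 else 0)) = 8 * Fintype.card N := by
        rw [Finset.sum_congr rfl (g := fun _ => 8) (by intro a _; split_ifs <;> rfl)]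
        simp [mul_comm]
      rw [Finset.sum_add_distrib] at this
      rw [← this]
      simp [mul_comm]
    simp only [B, List.map_append, List.sum_append] at c2 c3 ⊢
    omega

end Upper

/-- **The minimum memory-access cost of `P_G` computes the vertex-cover number.**
Let `G` be a finite simple graph with node set `N` and edge set `E` (enumerated
without repetition by `L`; `nodes` enumerates `N`).  The minimum of `#_M(Q)` over all
MultiSLPs `Q` equivalent to `P_G` equals `3·|E| + 8·|N| + τ(G)`.  Consequently, for a
`#_M`-minimum MultiSLP `Q` equivalent to `P_G`, the number
`k = #_M(Q) − 3·|E| − 8·|N|` is the size of a smallest vertex cover of `G`. -/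
theorem multislp_min_cost_eq_tau {N : Type} [Fintype N] [DecidableEq N]
    (G : SimpleGraph N) [DecidableRel G.Adj]
    (L : List (N × N)) (nodes : List N)
    (hnodesN : nodes.Nodup) (hnodesA : ∀ a : N, a ∈ nodes)
    (hLN : (L.map fun p => s(p.1, p.2)).Nodup)
    (hLadj : ∀ p ∈ L, G.Adj p.1 p.2)
    (hLall : ∀ a b : N, G.Adj a b → s(a, b) ∈ L.map fun p => s(p.1, p.2)) :
    sInf {m | ∃ Q : MultiSLP (Const N), Q.result = targetValues L nodes ∧ Q.costM = m} =
      3 * G.edgeFinset.card + 8 * Fintype.card N + tau G ∧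
    ∀ Q : MultiSLP (Const N), Q.result = targetValues L nodes →
      (∀ Q' : MultiSLP (Const N), Q'.result = targetValues L nodes → Q.costM ≤ Q'.costM) →
      Q.costM - (3 * G.edgeFinset.card + 8 * Fintype.card N) = tau G := by
  have hLE : G.edgeFinset.card = L.length := by
    have : G.edgeFinset = (L.map fun p => s(p.1, p.2)).toFinset := by
      ext e
      induction e using Sym2.ind with
      | _ a b =>
        rw [SimpleGraph.mem_edgeFinset, SimpleGraph.mem_edgeSet, List.mem_toFinset]
        refine ⟨hLall a b, fun h => ?_⟩
        obtain ⟨p, hp, hpe⟩ := List.mem_map.1 h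
        have := hLadj p hp
        rw [← SimpleGraph.mem_edgeSet] at this ⊢
        rw [← hpe]; exact this
    rw [this, List.toFinset_card_of_nodup hLN, List.length_map]
  rw [hLE]
  have hlow := lower_bound G L nodes hnodesA hLN hLadj hLall
  obtain ⟨Q₀, hQ₀, hc₀⟩ := upper_bound G L nodes hnodesN hnodesA hLadj
  refine ⟨?_, ?_⟩
  · apply le_antisymm
    · exact Nat.sInf_le ⟨Q₀, hQ₀, hc₀⟩
    · refine le_csInf ⟨_, Q₀, hQ₀, rfl⟩ ?_
      rintro _ ⟨Q, hQ, rfl⟩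
      exact hlow Q hQ
  · intro Q hQ hmin
    have h1 := hmin Q₀ hQ₀
    have h2 := hlow Q hQ
    omega
end
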